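/- arXiv:2411.06247 — 2 statements merged into one kernel-verified Lean document; each statement's English description precedes it below -/
import Mathlib

section
/- For all n and d with 3 ≤ d ≤ n−1 such that n−d is odd, the mixing time of the balanced double broom satisfies T_mix(D_{n,d}) = ((d−2)n − d + 5)/2 − (d³ − 6d² + 8d)/(6(n−1)). -/
/-!
For `n - d = 2 k + 1` the balanced double broom is symmetric, with `k + 1` leaves on each side and
`m = n - 1 = d + 2 k` edges. In any tree with `m` edges, hitting times are given by
`H(u,v) = m dist(u,v) + (D(v) - D(u)) / 2`, where `D(x) = ∑ w, deg w * dist(w,x)`: this function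
vanishes at `u = v` and satisfies the one-step equation, which characterises the hitting time
(`hit_eq`). Averaging over `π` gives `H(π,v) = D(v) - K / 2` with `K = ∑ u, π u * D(u)`, hence

`T_mix = K / 2 + max over v, w of (m dist(v,w) - (D(v) + D(w)) / 2)`.

In the double broom `D` depends only on the position of a vertex along the spine and has the closed
form `Dc` (`sum_deg_dl`). An elementary inequality (`E_le`, `F_le`) shows that the maximum is
attained at two leaves on opposite sides, with value `-2 k`, so `T_mix = K / 2 - 2 k` (`Tmix_B`);
evaluating `K` (`Kc_eq`) gives the formula.
-/

open scoped Classical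

namespace RWMix

/-- The degree of a vertex. -/
noncomputable def deg {W : Type*} (G : SimpleGraph W) (v : W) : ℕ :=
  Nat.card {w // G.Adj v w}

/-- The number of edges of a graph. -/
noncomputable def numEdges {W : Type*} (G : SimpleGraph W) : ℕ :=
  Nat.card G.edgeSet

/-- Transition matrix of the simple random walk: from `u` move to each neighbor
with probability `1/deg u`. -/
noncomputable def step {V : Type*} [Fintype V] (G : SimpleGraph V) : Matrix V V ℝ :=
  Matrix.of fun u w => if G.Adj u w then ((deg G u : ℝ))⁻¹ else 0

/-- The walk killed at `v` (rows at `v` are zeroed out). -/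
noncomputable def killed {V : Type*} [Fintype V] (G : SimpleGraph V) (v : V) :
    Matrix V V ℝ :=
  Matrix.of fun u w => if u = v then 0 else step G u w

/-- Expected hitting time `H(u,v)`: the sum over `t ≥ 0` of the probability that the walk
started at `u` has not visited `v` through time `t`.  This equals the expectation of the
first hitting time of `v`, and `hit G u u = 0`. -/
noncomputable def hit {V : Type*} [Fintype V] [DecidableEq V]
    (G : SimpleGraph V) (u v : V) : ℝ :=
  ∑' t : ℕ, ∑ w : V, (killed G v ^ t) u w * (if w = v then (0 : ℝ) else 1)

/-- The stationary distribution: `π v = deg v / (2 |E|)`. -/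
noncomputable def statPr {V : Type*} [Fintype V] (G : SimpleGraph V) (v : V) : ℝ :=
  (deg G v : ℝ) / (2 * (numEdges G : ℝ))

/-- The access time `H(π, v) = ∑_u π_u H(u,v)`. -/
noncomputable def hitPi {V : Type*} [Fintype V] [DecidableEq V]
    (G : SimpleGraph V) (v : V) : ℝ :=
  ∑ u : V, statPr G u * hit G u v

/-- The mixing time from vertex `v`: `H(v,π) = max_w H(w,v) − H(π,v)`. -/
noncomputable def mixFrom {V : Type*} [Fintype V] [DecidableEq V]
    (G : SimpleGraph V) (v : V) : ℝ :=
  (⨆ w : V, hit G w v) - hitPi G v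

/-- The (exact) mixing time `T_mix(G) = max_v H(v,π)`. -/
noncomputable def Tmix {V : Type*} [Fintype V] [DecidableEq V]
    (G : SimpleGraph V) : ℝ :=
  ⨆ v : V, mixFrom G v

/-- Edges of the double broom, on vertex set `Fin (d+1) ⊕ Fin a ⊕ Fin b`:
the spine path `v_0, …, v_d`, extra left leaves attached to `v_1`,
and extra right leaves attached to `v_{d-1}`. -/
def broomRel (d : ℕ) {a b : ℕ} :
    (Fin (d+1) ⊕ Fin a ⊕ Fin b) → (Fin (d+1) ⊕ Fin a ⊕ Fin b) → Prop
  | Sum.inl i, Sum.inl j => (i : ℕ) + 1 = (j : ℕ)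
  | Sum.inr (Sum.inl _), Sum.inl j => (j : ℕ) = 1
  | Sum.inr (Sum.inr _), Sum.inl j => (j : ℕ) = d - 1
  | _, _ => False

/-- The double broom of diameter `d` with `ℓ` left leaves and `r` right leaves:
the diametral path is `v_0, …, v_d` (where `v_0` is one left leaf and `v_d` one right
leaf), together with `ℓ - 1` further pendant leaves at `v_1` and `r - 1` further pendant
leaves at `v_{d-1}`.  It has `d - 1 + ℓ + r` vertices. -/
def doubleBroom (d ℓ r : ℕ) :
    SimpleGraph (Fin (d+1) ⊕ Fin (ℓ-1) ⊕ Fin (r-1)) :=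
  SimpleGraph.fromRel (broomRel d)

/-- The balanced double broom `D_{n,d}`, with `ℓ = ⌈(n-d+1)/2⌉` and `r = ⌊(n-d+1)/2⌋`. -/
def balancedDB (n d : ℕ) :=
  doubleBroom d ((n - d + 2) / 2) ((n - d + 1) / 2)

/-- A leaf is a vertex of degree one. -/
def IsLeaf {W : Type*} (G : SimpleGraph W) (v : W) : Prop := deg G v = 1

/-- `v 0, v 1, …, v s` is a leaf-to-leaf path in `G`. -/
def IsLeafPath {W : Type*} (G : SimpleGraph W) (s : ℕ) (v : Fin (s+1) → W) : Prop :=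
  Function.Injective v ∧
  (∀ i : ℕ, ∀ h : i < s, G.Adj (v ⟨i, by omega⟩) (v ⟨i + 1, by omega⟩)) ∧
  IsLeaf G (v 0) ∧ IsLeaf G (v (Fin.last s))

/-- A caterpillar: every vertex is within distance one of a fixed leaf-to-leaf path
(the spine). -/
def IsCaterpillar {W : Type*} (G : SimpleGraph W) : Prop :=
  ∃ (s : ℕ) (v : Fin (s+1) → W), IsLeafPath G s v ∧ ∀ w, ∃ i, G.dist w (v i) ≤ 1

/-- Move the leaf `y` from its neighbor `a` to the new neighbor `b`:
delete the edge `{a,y}` and add the edge `{b,y}`. -/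
def moveLeaf {W : Type*} (G : SimpleGraph W) (a y b : W) : SimpleGraph W :=
  SimpleGraph.fromEdgeSet ((G.edgeSet \ {s(a, y)}) ∪ {s(b, y)})

/-- A graph is a double broom if it is isomorphic to some `doubleBroom d ℓ r`
with `ℓ, r ≥ 1`. -/
def IsDoubleBroom {W : Type*} (G : SimpleGraph W) : Prop :=
  ∃ (d ℓ r : ℕ), 1 ≤ ℓ ∧ 1 ≤ r ∧ Nonempty (G ≃g doubleBroom d ℓ r)

/-- A near double broom: not a double broom, but there is exactly one leaf whose
removal results in a double broom. -/
def IsNearDoubleBroom {W : Type*} (G : SimpleGraph W) : Prop :=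
  ¬ IsDoubleBroom G ∧
    ∃! x : W, IsLeaf G x ∧ IsDoubleBroom (G.induce {y | y ≠ x})

/-- `w` belongs to the set `V_k`: either `w = v k`, or `w` is a vertex off the spine
adjacent to `v k`. -/
def inVk {W : Type*} {d : ℕ} (G : SimpleGraph W) (v : Fin (d+1) → W)
    (k : Fin (d+1)) (w : W) : Prop :=
  w = v k ∨ ((∀ m, w ≠ v m) ∧ G.Adj (v k) w)


/-! ### Hitting times from the one-step equation -/

lemma deg_eq_sum {V : Type*} [Fintype V] (G : SimpleGraph V) (u : V) :
    (deg G u : ℝ) = ∑ w, if G.Adj u w then (1 : ℝ) else 0 := by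
  simp [deg, Nat.card_eq_fintype_card, Fintype.card_subtype]

lemma step_sum {V : Type*} [Fintype V] (G : SimpleGraph V) (u : V) (g : V → ℝ) :
    ∑ w, step G u w * g w = (deg G u : ℝ)⁻¹ * ∑ w, if G.Adj u w then g w else 0 := by
  rw [Finset.mul_sum]
  refine Finset.sum_congr rfl fun w _ => ?_
  simp only [step, Matrix.of_apply]
  split_ifs <;> simp

lemma killed_nonneg {V : Type*} [Fintype V] (G : SimpleGraph V) (v u w : V) :
    0 ≤ killed G v u w := by
  simp only [killed, step, Matrix.of_apply]
  split_ifs <;> positivity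

lemma killed_row {V : Type*} [Fintype V] (G : SimpleGraph V) (v u : V) :
    ∑ w, killed G v u w ≤ 1 := by
  by_cases h : u = v
  · simp [killed, h]
  · have h1 : ∑ w, killed G v u w = ∑ w, step G u w * 1 := by simp [killed, h]
    rw [h1, step_sum, ← deg_eq_sum]
    exact inv_mul_le_one

lemma killed_pow_nonneg {V : Type*} [Fintype V] [DecidableEq V] (G : SimpleGraph V) (v : V)
    (t : ℕ) (u w : V) : 0 ≤ (killed G v ^ t) u w := by
  induction t generalizing u w with
  | zero => rw [pow_zero, Matrix.one_apply]; split_ifs <;> norm_num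
  | succ t ih =>
    rw [pow_succ, Matrix.mul_apply]
    exact Finset.sum_nonneg fun x _ => mul_nonneg (ih u x) (killed_nonneg G v x w)

lemma killed_pow_row {V : Type*} [Fintype V] [DecidableEq V] (G : SimpleGraph V) (v : V)
    (t : ℕ) (u : V) : ∑ w, (killed G v ^ t) u w ≤ 1 := by
  induction t with
  | zero => simp [Matrix.one_apply]
  | succ t ih =>
    simp only [pow_succ, Matrix.mul_apply]
    rw [Finset.sum_comm]
    refine le_trans (Finset.sum_le_sum fun x _ => ?_) ih
    rw [← Finset.mul_sum]
    exact mul_le_of_le_one_right (killed_pow_nonneg G v t u x) (killed_row G v x)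

/-- A function vanishing at `v` and satisfying the one-step equation elsewhere is the hitting
time of `v`. With `M` the killed matrix and `f` the indicator of `V \ {v}`, the equation reads
`h = f + M h`, so the partial sums of the series defining `hit` are `h - M ^ T h`. They are bounded,
so `M ^ T f → 0`, and `|M ^ T h| ≤ (max |h|) M ^ T f` tends to `0` too. -/
lemma hit_eq {V : Type*} [Fintype V] [DecidableEq V] (G : SimpleGraph V) (v : V) (h : V → ℝ)
    (hv : h v = 0) (hstep : ∀ u, u ≠ v → h u = 1 + ∑ w, step G u w * h w) (u : V) :
    hit G u v = h u := by
  set f : V → ℝ := fun w => if w = v then (0 : ℝ) else 1 with hf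
  have f_nonneg : ∀ w, 0 ≤ f w := fun w => by simp only [hf]; split_ifs <;> norm_num
  have f_le : ∀ w, f w ≤ 1 := fun w => by simp only [hf]; split_ifs <;> norm_num
  have fix : ∀ x, h x = f x + ∑ w, killed G v x w * h w := by
    intro x
    by_cases hx : x = v
    · simp [hx, hf, killed, hv]
    · simpa [hx, hf, killed] using hstep x hx
  have tele : ∀ T : ℕ, ∑ t ∈ Finset.range T, ∑ w, (killed G v ^ t) u w * f w
      = h u - ∑ w, (killed G v ^ T) u w * h w := by
    intro T
    induction T with
    | zero => simp [Matrix.one_apply]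
    | succ T ih =>
      have e : ∑ w, (killed G v ^ T) u w * h w = ∑ w, (killed G v ^ T) u w * f w
          + ∑ w, (killed G v ^ (T + 1)) u w * h w := by
        simp only [pow_succ, Matrix.mul_apply, Finset.sum_mul]
        rw [Finset.sum_comm (s := Finset.univ) (t := Finset.univ), ← Finset.sum_add_distrib]
        refine Finset.sum_congr rfl fun x _ => ?_
        conv_lhs => rw [fix x]
        rw [mul_add, Finset.mul_sum]
        simp only [mul_assoc]
      rw [Finset.sum_range_succ, ih, e]; ring
  obtain ⟨C, hC⟩ : ∃ C : ℝ, ∀ x, |h x| ≤ C :=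
    ⟨∑ x, |h x|, fun x => Finset.single_le_sum (f := fun x => |h x|)
      (fun y _ => abs_nonneg _) (Finset.mem_univ x)⟩
  have C_nonneg : 0 ≤ C := (abs_nonneg _).trans (hC u)
  have hCf : ∀ x, |h x| ≤ C * f x := by
    intro x
    by_cases hx : x = v
    · simp [hx, hv, hf]
    · simpa [hx, hf] using hC x
  have bound : ∀ T : ℕ, |∑ w, (killed G v ^ T) u w * h w|
      ≤ C * ∑ w, (killed G v ^ T) u w * f w := by
    intro T
    refine (Finset.abs_sum_le_sum_abs _ _).trans ?_
    rw [Finset.mul_sum]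
    refine Finset.sum_le_sum fun w _ => ?_
    rw [abs_mul, abs_of_nonneg (killed_pow_nonneg G v T u w)]
    calc _ ≤ (killed G v ^ T) u w * (C * f w) :=
          mul_le_mul_of_nonneg_left (hCf w) (killed_pow_nonneg G v T u w)
      _ = _ := by ring
  have term_nonneg : ∀ T : ℕ, 0 ≤ ∑ w, (killed G v ^ T) u w * f w := fun T =>
    Finset.sum_nonneg fun w _ => mul_nonneg (killed_pow_nonneg G v T u w) (f_nonneg w)
  have term_le : ∀ T : ℕ, ∑ w, (killed G v ^ T) u w * f w ≤ 1 := fun T =>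
    (Finset.sum_le_sum fun w _ =>
      mul_le_of_le_one_right (killed_pow_nonneg G v T u w) (f_le w)).trans
        (killed_pow_row G v T u)
  have summ : Summable fun t : ℕ => ∑ w, (killed G v ^ t) u w * f w := by
    refine summable_of_sum_range_le (c := h u + C) term_nonneg fun T => ?_
    rw [tele T]
    have h1 := neg_abs_le (∑ w, (killed G v ^ T) u w * h w)
    have h2 := mul_le_mul_of_nonneg_left (term_le T) C_nonneg
    have h3 := bound T
    linarith
  have lim0 : Filter.Tendsto (fun T : ℕ => ∑ w, (killed G v ^ T) u w * h w)
      Filter.atTop (nhds 0) := by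
    refine squeeze_zero_norm bound ?_
    simpa using summ.tendsto_atTop_zero.const_mul C
  have lim : Filter.Tendsto (fun T : ℕ => ∑ t ∈ Finset.range T, ∑ w, (killed G v ^ t) u w * f w)
      Filter.atTop (nhds (h u)) := by
    simp only [tele]
    simpa using lim0.const_sub (h u)
  exact tendsto_nhds_unique summ.hasSum.tendsto_sum_nat lim

/-! ### Degrees and neighbour sums in the symmetric double broom -/

/-- Vertices of the symmetric double broom with `k` extra leaves on each side. -/
abbrev BV (d k : ℕ) := Fin (d + 1) ⊕ Fin k ⊕ Fin k

/-- The double broom of diameter `d` with `k + 1` leaves on each side. -/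
def B (d k : ℕ) : SimpleGraph (BV d k) := SimpleGraph.fromRel (broomRel d)

section
variable {d k : ℕ}

lemma adj_ii (i j : Fin (d + 1)) :
    (B d k).Adj (.inl i) (.inl j) ↔ (i : ℕ) + 1 = j ∨ (j : ℕ) + 1 = i := by
  simp only [B, SimpleGraph.fromRel_adj, broomRel, ne_eq, Sum.inl.injEq, Fin.ext_iff]
  omega

lemma adj_il (i : Fin (d + 1)) (a : Fin k) :
    (B d k).Adj (.inl i) (.inr (.inl a)) ↔ (i : ℕ) = 1 := by
  simp [B, SimpleGraph.fromRel_adj, broomRel]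

lemma adj_ir (i : Fin (d + 1)) (a : Fin k) :
    (B d k).Adj (.inl i) (.inr (.inr a)) ↔ (i : ℕ) = d - 1 := by
  simp [B, SimpleGraph.fromRel_adj, broomRel]

lemma adj_li (i : Fin (d + 1)) (a : Fin k) :
    (B d k).Adj (.inr (.inl a)) (.inl i) ↔ (i : ℕ) = 1 := by
  simp [B, SimpleGraph.fromRel_adj, broomRel]

lemma adj_ri (i : Fin (d + 1)) (a : Fin k) :
    (B d k).Adj (.inr (.inr a)) (.inl i) ↔ (i : ℕ) = d - 1 := by
  simp [B, SimpleGraph.fromRel_adj, broomRel]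

lemma not_adj_rr (a b : Fin k ⊕ Fin k) : ¬ (B d k).Adj (.inr a) (.inr b) := by
  rcases a with a | a <;> rcases b with b | b <;> simp [B, SimpleGraph.fromRel_adj, broomRel]

/-- The sum of `g` over the neighbours of `u`. -/
noncomputable def nbr (u : BV d k) (g : BV d k → ℝ) : ℝ :=
  ∑ w, if (B d k).Adj u w then g w else 0

lemma sum_fin_ite (i : ℕ) (hi : i < d + 1) (g : Fin (d + 1) → ℝ) :
    (∑ j : Fin (d + 1), if (j : ℕ) = i then g j else 0) = g ⟨i, hi⟩ := by
  rw [Finset.sum_eq_single ⟨i, hi⟩]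
  · simp
  · intro b _ hb
    rw [if_neg]
    simpa [Fin.ext_iff] using hb
  · simp

lemma nbr_left (hd : 3 ≤ d) (a : Fin k) (g : BV d k → ℝ) :
    nbr (.inr (.inl a)) g = g (.inl ⟨1, by omega⟩) := by
  simp only [nbr, Fintype.sum_sum_type, adj_li, not_adj_rr, if_false, Finset.sum_const_zero,
    add_zero]
  exact sum_fin_ite 1 (by omega) fun j => g (.inl j)

lemma nbr_right (a : Fin k) (g : BV d k → ℝ) :
    nbr (.inr (.inr a)) g = g (.inl ⟨d - 1, by omega⟩) := by
  simp only [nbr, Fintype.sum_sum_type, adj_ri, not_adj_rr, if_false, Finset.sum_const_zero,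
    add_zero]
  exact sum_fin_ite (d - 1) (by omega) fun j => g (.inl j)

lemma nbr_zero (hd : 3 ≤ d) (g : BV d k → ℝ) :
    nbr (.inl ⟨0, by omega⟩) g = g (.inl ⟨1, by omega⟩) := by
  simp only [nbr, Fintype.sum_sum_type, adj_ii, adj_il, adj_ir]
  rw [← sum_fin_ite 1 (by omega) fun j => g (.inl j)]
  have : ¬ (0 = d - 1) := by omega
  simp [this, eq_comm]

lemma nbr_last (hd : 3 ≤ d) (g : BV d k → ℝ) :
    nbr (.inl ⟨d, by omega⟩) g = g (.inl ⟨d - 1, by omega⟩) := by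
  simp only [nbr, Fintype.sum_sum_type, adj_ii, adj_il, adj_ir]
  rw [← sum_fin_ite (d - 1) (by omega) fun j => g (.inl j)]
  have h1 : ¬ (d = d - 1) := by omega
  have h2 : ¬ (d = 1) := by omega
  simp only [h1, h2, if_false, Finset.sum_const_zero, add_zero]
  refine Finset.sum_congr rfl fun j _ => ?_
  have := j.2
  exact if_congr (by omega) rfl rfl

lemma nbr_mid (i : ℕ) (hi : i + 1 < d) (g : BV d k → ℝ) :
    nbr (.inl ⟨i + 1, by omega⟩) g = g (.inl ⟨i, by omega⟩) + g (.inl ⟨i + 2, by omega⟩)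
      + (if i = 0 then ∑ a, g (.inr (.inl a)) else 0)
      + (if i + 2 = d then ∑ a, g (.inr (.inr a)) else 0) := by
  simp only [nbr, Fintype.sum_sum_type, adj_ii, adj_il, adj_ir]
  have h2 : (i + 1 = d - 1) ↔ (i + 2 = d) := by omega
  have hL : (∑ a : Fin k, if i + 1 = 1 then g (.inr (.inl a)) else 0)
      = if i = 0 then ∑ a, g (.inr (.inl a)) else 0 := by
    by_cases h : i = 0 <;> simp [h]
  have hR : (∑ a : Fin k, if i + 1 = d - 1 then g (.inr (.inr a)) else 0)
      = if i + 2 = d then ∑ a, g (.inr (.inr a)) else 0 := by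
    by_cases h : i + 2 = d <;> simp [h2, h]
  rw [hL, hR, ← add_assoc]
  congr 2
  rw [← sum_fin_ite i (by omega) fun j => g (.inl j),
    ← sum_fin_ite (i + 2) (by omega) fun j => g (.inl j), ← Finset.sum_add_distrib]
  refine Finset.sum_congr rfl fun j _ => ?_
  by_cases h1 : (j : ℕ) = i
  · simp [h1]
  · by_cases h2 : (j : ℕ) = i + 2
    · simp [h2]
    · rw [if_neg (by omega), if_neg h1, if_neg h2, add_zero]

lemma deg_eq_nbr (u : BV d k) : (deg (B d k) u : ℝ) = nbr u fun _ => 1 := deg_eq_sum _ _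

/-- Case analysis over the vertices, separating the spine leaves from the inner spine. -/
lemma BV_cases {P : BV d k → Prop} (h0 : P (.inl ⟨0, by omega⟩)) (h1 : P (.inl ⟨d, by omega⟩))
    (hm : ∀ i (hi : i + 1 < d), P (.inl ⟨i + 1, by omega⟩)) (hl : ∀ a, P (.inr (.inl a)))
    (hr : ∀ a, P (.inr (.inr a))) (u : BV d k) : P u := by
  rcases u with ⟨i, hi⟩ | a | a
  · rcases i with _ | i
    · exact h0
    · by_cases h : i + 1 = d
      · subst h; exact h1
      · exact hm i (by omega)
  · exact hl a
  · exact hr a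

lemma deg_pos (hd : 3 ≤ d) (u : BV d k) : 0 < (deg (B d k) u : ℝ) := by
  rw [deg_eq_nbr]
  induction u using BV_cases with
  | h0 => rw [nbr_zero hd]; norm_num
  | h1 => rw [nbr_last hd]; norm_num
  | hm i hi => rw [nbr_mid i hi]; positivity
  | hl a => rw [nbr_left hd]; norm_num
  | hr a => rw [nbr_right]; norm_num

lemma deg_inl (hd : 3 ≤ d) (i : Fin (d + 1)) : (deg (B d k) (.inl i) : ℝ) =
    2 - (if (i : ℕ) = 0 then 1 else 0) - (if (i : ℕ) = d then 1 else 0)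
      + (if (i : ℕ) = 1 then (k : ℝ) else 0) + (if (i : ℕ) = d - 1 then (k : ℝ) else 0) := by
  rw [deg_eq_nbr]
  obtain ⟨i, hi⟩ := i
  rcases i with _ | i
  · rw [nbr_zero hd]
    have h1 : ¬ (0 = d) := by omega
    have h2 : ¬ (0 = d - 1) := by omega
    simp only [h1, h2, if_false, if_true]
    norm_num
  · by_cases h : i + 1 = d
    · subst h
      rw [nbr_last hd]
      have h1 : ¬ (i = 0) := by omega
      simp [h1]
      norm_num
    · rw [nbr_mid i (by omega)]
      have h2 : (i + 1 = d - 1) ↔ (i + 2 = d) := by omega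
      simp only [h, h2, if_false]
      norm_num

/-- The degree-weighted sum of a function given separately on the spine, the extra left leaves and
the extra right leaves. The end terms `g 0`, `g d` and the `k`-fold terms correct the degree `2` of
a generic spine vertex. -/
lemma sum_deg (hd : 3 ≤ d) (g : ℕ → ℝ) (gl gr : Fin k → ℝ) :
    ∑ u : BV d k, (deg (B d k) u : ℝ) *
        Sum.elim (fun i : Fin (d + 1) => g i) (Sum.elim gl gr) u
      = 2 * (∑ i ∈ Finset.range (d + 1), g i) - g 0 - g d + k * g 1 + k * g (d - 1)
        + ∑ a, gl a + ∑ a, gr a := by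
  have hl : ∀ a : Fin k, (deg (B d k) (.inr (.inl a)) : ℝ) = 1 := fun a => by
    rw [deg_eq_nbr, nbr_left hd]
  have hr : ∀ a : Fin k, (deg (B d k) (.inr (.inr a)) : ℝ) = 1 := fun a => by
    rw [deg_eq_nbr, nbr_right]
  simp only [Fintype.sum_sum_type, Sum.elim_inl, Sum.elim_inr, hl, hr, one_mul, deg_inl hd,
    add_mul, sub_mul, ite_mul, zero_mul, Finset.sum_add_distrib, Finset.sum_sub_distrib]
  rw [sum_fin_ite 0 (by omega), sum_fin_ite d (by omega), sum_fin_ite 1 (by omega),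
    sum_fin_ite (d - 1) (by omega), ← Finset.mul_sum, Fin.sum_univ_eq_sum_range g (d + 1)]
  ring

lemma sum_deg_one (hd : 3 ≤ d) : ∑ u : BV d k, (deg (B d k) u : ℝ) = 2 * (d + 2 * k) := by
  have h := sum_deg (d := d) (k := k) hd (fun _ => 1) (fun _ => 1) (fun _ => 1)
  have e : ∀ u : BV d k, Sum.elim (fun _ : Fin (d + 1) => (1 : ℝ))
      (Sum.elim (fun _ => 1) (fun _ => 1)) u = 1 := by
    rintro (i | a | a) <;> rfl
  simp only [e, mul_one] at h
  rw [h]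
  simp
  ring

lemma numEdges_eq (hd : 3 ≤ d) : (numEdges (B d k) : ℝ) = d + 2 * k := by
  have h := (B d k).sum_degrees_eq_twice_card_edges
  have h1 : ∀ u, (B d k).degree u = deg (B d k) u := fun u => by
    rw [← SimpleGraph.card_neighborSet_eq_degree, ← Nat.card_eq_fintype_card]; rfl
  have h2 : (B d k).edgeFinset.card = numEdges (B d k) := by
    rw [numEdges, Nat.card_eq_fintype_card, SimpleGraph.edgeFinset_card]
  simp only [h1, h2] at h
  have h3 := sum_deg_one (k := k) hd
  have h4 : ∑ u : BV d k, (deg (B d k) u : ℝ) = 2 * (numEdges (B d k) : ℝ) := by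
    exact_mod_cast h
  linarith

/-! ### Distances and hitting times in the symmetric double broom -/

/-- The graph distance of the symmetric double broom. -/
noncomputable def dl : BV d k → BV d k → ℝ
  | .inl i, .inl j => |((i : ℕ) : ℝ) - ((j : ℕ) : ℝ)|
  | .inl i, .inr (.inl _) => (i : ℕ) + if (i : ℕ) = 0 then 2 else 0
  | .inl i, .inr (.inr _) => (d : ℝ) - (i : ℕ) + if (i : ℕ) = d then 2 else 0
  | .inr (.inl _), .inl i => (i : ℕ) + if (i : ℕ) = 0 then 2 else 0
  | .inr (.inr _), .inl i => (d : ℝ) - (i : ℕ) + if (i : ℕ) = d then 2 else 0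
  | .inr (.inl a), .inr (.inl b) => if a = b then 0 else 2
  | .inr (.inr a), .inr (.inr b) => if a = b then 0 else 2
  | .inr (.inl _), .inr (.inr _) => d
  | .inr (.inr _), .inr (.inl _) => d

/-- The position of a vertex along the spine; every left leaf is at `0`, every right leaf
at `d`. -/
def ps : BV d k → ℕ
  | .inl i => i
  | .inr (.inl _) => 0
  | .inr (.inr _) => d

/-- The value of `Dc` at position `p`. -/
noncomputable def Ec (d k p : ℕ) : ℝ :=
  2 * k * (d - 1) + (p : ℝ) ^ 2 + ((d : ℝ) - p) ^ 2
    + (if p = 0 then 4 * (k : ℝ) else 0) + if p = d then 4 * (k : ℝ) else 0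

/-- Closed form of the degree-weighted distance sum `∑ u, deg u * dist u v`. -/
noncomputable def Dc (v : BV d k) : ℝ := Ec d k (ps v)

/-- The total distance from a leaf to the extra leaves on its own side. -/
lemma sum_ite_two (b : Fin k) : (∑ a : Fin k, if a = b then (0 : ℝ) else 2) = 2 * k - 2 := by
  have h : ∀ a : Fin k, (if a = b then (0 : ℝ) else 2) = 2 - if a = b then 2 else 0 := by
    intro a; split_ifs <;> norm_num
  simp only [h, Finset.sum_sub_distrib, Finset.sum_ite_eq', Finset.mem_univ, if_true]
  simp
  ring

lemma dl_self (v : BV d k) : dl v v = 0 := by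
  rcases v with i | a | a <;> simp [dl]

/-- In a tree, all neighbours of `u` but one are one step further from `v ≠ u`. -/
lemma nbr_dl (hd : 3 ≤ d) (u v : BV d k) (huv : u ≠ v) :
    nbr u (fun w => dl w v) = nbr u (fun _ => 1) * (dl u v + 1) - 2 := by
  induction u using BV_cases with
  | h0 =>
    rw [nbr_zero hd, nbr_zero hd]
    rcases v with ⟨j, hj⟩ | b | b
    · have h : (1 : ℝ) ≤ j := by
        have : j ≠ 0 := by rintro rfl; exact huv rfl
        exact_mod_cast (by omega : 1 ≤ j)
      simp only [dl]
      push_cast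
      rw [abs_of_nonpos (by linarith), abs_of_nonpos (by linarith)]
      ring
    · simp [dl]
    · have h1 : ¬ (1 = d) := by omega
      have h2 : ¬ (0 = d) := by omega
      simp [dl, h1, h2]; ring
  | h1 =>
    rw [nbr_last hd, nbr_last hd]
    obtain ⟨e, rfl⟩ : ∃ e, d = e + 2 := ⟨d - 2, by omega⟩
    have he : e + 2 - 1 = e + 1 := by omega
    rcases v with ⟨j, hj⟩ | b | b
    · have h : (j : ℝ) ≤ e + 1 := by
        have : j ≠ e + 2 := by rintro rfl; exact huv rfl
        exact_mod_cast (by omega : j ≤ e + 1)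
      simp only [dl, he]
      push_cast
      rw [abs_of_nonneg (by linarith), abs_of_nonneg (by linarith)]
      ring
    · simp [dl, he]; ring
    · simp [dl, he]; norm_num
  | hm i hi =>
    rw [nbr_mid i hi, nbr_mid i hi]
    have h1 : ¬ (i = d) := by omega
    have h2 : ¬ (i + 1 = d) := by omega
    have h5 : ¬ (i + 2 = 0) := by omega
    have h6 : ¬ (i + 1 = 0) := by omega
    have h7 : i = 0 → ¬ (i + 2 = d) := by omega
    rcases v with ⟨j, hj⟩ | b | b
    · have hne : j ≠ i + 1 := by rintro rfl; exact huv rfl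
      have h0d : ¬ (d = 0) := by omega
      simp only [dl]
      have key : |(i : ℝ) - j| + |((i + 2 : ℕ) : ℝ) - j| = 2 * |((i + 1 : ℕ) : ℝ) - j| := by
        push_cast
        rcases Nat.lt_or_ge i j with h | h
        · have h' : (i : ℝ) + 2 ≤ j := by exact_mod_cast (by omega : i + 2 ≤ j)
          rw [abs_of_nonpos (by linarith), abs_of_nonpos (by linarith),
            abs_of_nonpos (by linarith)]
          ring
        · have h' : (j : ℝ) ≤ i := by exact_mod_cast h
          rw [abs_of_nonneg (by linarith), abs_of_nonneg (by linarith),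
            abs_of_nonneg (by linarith)]
          ring
      have hL : i = 0 → ((j : ℝ) + if j = 0 then 2 else 0)
          = |((i + 1 : ℕ) : ℝ) - j| + 1 := by
        rintro rfl
        rcases Nat.eq_zero_or_pos j with rfl | hj0
        · norm_num
        · have h' : (1 : ℝ) ≤ j := by exact_mod_cast hj0
          rw [if_neg (by omega), abs_of_nonpos (by push_cast; linarith)]
          push_cast; ring
      have hR : i + 2 = d → ((d : ℝ) - j + if j = d then 2 else 0)
          = |((i + 1 : ℕ) : ℝ) - j| + 1 := by
        rintro rfl
        by_cases hjd : j = i + 2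
        · subst hjd
          push_cast
          rw [abs_of_nonpos (by linarith), if_pos rfl]; ring
        · have h' : (j : ℝ) ≤ i + 1 := by exact_mod_cast (by omega : j ≤ i + 1)
          rw [if_neg hjd, abs_of_nonneg (by push_cast; linarith)]
          push_cast; ring
      rw [key]
      simp only [Finset.sum_const, Finset.card_univ, Fintype.card_fin, nsmul_eq_mul]
      by_cases hi0 : i = 0
      · rw [if_pos hi0, if_pos hi0, if_neg (h7 hi0), if_neg (h7 hi0), hL hi0]
        ring
      · rw [if_neg hi0, if_neg hi0]
        by_cases hid : i + 2 = d
        · rw [if_pos hid, if_pos hid, hR hid]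
          ring
        · rw [if_neg hid, if_neg hid]
          ring
    · by_cases hi0 : i = 0
      · have h8 := h7 hi0
        simp only [dl, h5, h6, h8, if_false, sum_ite_two]
        subst hi0
        simp
        ring
      · by_cases h8 : i + 2 = d
        · subst h8
          simp [dl, hi0]
          ring
        · simp [dl, hi0, h8]
          ring
    · by_cases hi0 : i = 0
      · have h8 := h7 hi0
        subst hi0
        have h9 : ¬ (0 = d) := by omega
        have h10 : ¬ (1 = d) := by omega
        have h11 : ¬ (2 = d) := by omega
        simp [dl, h9, h10, h11]
        ring
      · by_cases h8 : i + 2 = d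
        · simp only [dl, h1, h2, hi0, h8, if_false, if_true, sum_ite_two]
          subst h8
          simp
          ring
        · simp [dl, hi0, h8, h1, h2]
          ring
  | hl a =>
    rw [nbr_left hd, nbr_left hd]
    rcases v with ⟨j, hj⟩ | b | b
    · simp only [dl]
      rcases Nat.eq_zero_or_pos j with rfl | hj0
      · norm_num
      · have h' : (1 : ℝ) ≤ j := by exact_mod_cast hj0
        rw [if_neg (by omega), abs_of_nonpos (by push_cast; linarith)]
        push_cast; ring
    · have : a ≠ b := by rintro rfl; exact huv rfl
      simp [dl, this]
    · have h1 : ¬ (1 = d) := by omega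
      simp [dl, h1]; ring
  | hr a =>
    rw [nbr_right, nbr_right]
    obtain ⟨e, rfl⟩ : ∃ e, d = e + 2 := ⟨d - 2, by omega⟩
    have he : e + 2 - 1 = e + 1 := by omega
    rcases v with ⟨j, hj⟩ | b | b
    · simp only [dl, he]
      by_cases hjd : j = e + 2
      · subst hjd
        push_cast
        rw [abs_of_nonpos (by linarith), if_pos rfl]; ring
      · have h' : (j : ℝ) ≤ e + 1 := by exact_mod_cast (by omega : j ≤ e + 1)
        rw [if_neg hjd, abs_of_nonneg (by push_cast; linarith)]
        push_cast; ring
    · simp [dl, he]; ring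
    · have : a ≠ b := by rintro rfl; exact huv rfl
      simp [dl, he, this]; norm_num

lemma nbr_Dc (hd : 3 ≤ d) (u : BV d k) :
    nbr u Dc = nbr u (fun _ => 1) * (Dc u + 2 * (d + 2 * k) + 2) - 4 * (d + 2 * k) := by
  induction u using BV_cases with
  | h0 =>
    have h1 : ¬ (0 = d) := by omega
    have h2 : ¬ (1 = d) := by omega
    simp only [nbr_zero hd, Dc, Ec, ps, h1, h2, if_true, if_false, one_ne_zero]
    push_cast; ring
  | h1 =>
    obtain ⟨e, rfl⟩ : ∃ e, d = e + 2 := ⟨d - 2, by omega⟩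
    have h1 : ¬ (e + 2 = 0) := by omega
    have h2 : ¬ (e + 2 - 1 = e + 2) := by omega
    have h3 : ¬ (e + 2 - 1 = 0) := by omega
    simp only [nbr_last hd, Dc, Ec, ps, h1, h2, h3, if_true, if_false]
    push_cast; ring
  | hm i hi =>
    have h1 : ¬ (i = d) := by omega
    have h2 : ¬ (i + 1 = d) := by omega
    have h3 : ¬ (0 = d) := by omega
    have h4 : ¬ (d = 0) := by omega
    have h5 : ¬ (i + 2 = 0) := by omega
    have h6 : ¬ (i + 1 = 0) := by omega
    simp only [nbr_mid i hi, Dc, Ec, ps, h1, h2, h3, h4, h5, h6, if_true, if_false,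
      Finset.sum_const, Finset.card_univ, Fintype.card_fin, nsmul_eq_mul]
    by_cases h7 : i = 0
    · have h8 : ¬ (i + 2 = d) := by omega
      simp only [h8, if_false]
      subst h7
      simp only [if_true]
      push_cast; ring
    · by_cases h8 : i + 2 = d
      · simp only [h7, h8, if_true, if_false]
        subst h8
        push_cast; ring
      · simp only [h7, h8, if_false]
        push_cast; ring
  | hl a =>
    have h1 : ¬ (0 = d) := by omega
    have h2 : ¬ (1 = d) := by omega
    simp only [nbr_left hd, Dc, Ec, ps, h1, h2, if_true, if_false, one_ne_zero]
    push_cast; ring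
  | hr a =>
    obtain ⟨e, rfl⟩ : ∃ e, d = e + 2 := ⟨d - 2, by omega⟩
    have h1 : ¬ (e + 2 = 0) := by omega
    have h2 : ¬ (e + 2 - 1 = e + 2) := by omega
    have h3 : ¬ (e + 2 - 1 = 0) := by omega
    simp only [nbr_right, Dc, Ec, ps, h1, h2, h3, if_true, if_false]
    push_cast; ring

lemma sum_abs_range (j e : ℕ) : ∑ i ∈ Finset.range (j + e + 1), |(i : ℝ) - j|
    = j * (j + 1) / 2 + e * (e + 1) / 2 := by
  induction j with
  | zero =>
    simp only [Nat.cast_zero, sub_zero, Nat.abs_cast, zero_add, zero_mul, zero_div]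
    induction e with
    | zero => simp
    | succ e ih => rw [Finset.sum_range_succ, ih]; push_cast; ring
  | succ j ih =>
    rw [show j + 1 + e + 1 = (j + e + 1) + 1 by ring, Finset.sum_range_succ']
    have h : ∀ i : ℕ, ((i + 1 : ℕ) : ℝ) - ((j + 1 : ℕ) : ℝ) = i - j := fun i => by
      push_cast; ring
    simp only [h, ih]
    rw [abs_of_nonpos (by push_cast; linarith [Nat.cast_nonneg (α := ℝ) j])]
    push_cast; ring

lemma sum_id_range (N : ℕ) : ∑ i ∈ Finset.range N, (i : ℝ) = N * (N - 1) / 2 := by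
  induction N with
  | zero => simp
  | succ N ih => rw [Finset.sum_range_succ, ih]; push_cast; ring

lemma sum_deg_dl (hd : 3 ≤ d) (v : BV d k) :
    ∑ u, (deg (B d k) u : ℝ) * dl u v = Dc v := by
  have hd1 : ((d - 1 : ℕ) : ℝ) = d - 1 := by rw [Nat.cast_sub (by omega)]; simp
  have h0d : ¬ (0 = d) := by omega
  have hd0 : ¬ (d = 0) := by omega
  have h1d : ¬ (1 = d) := by omega
  have hd10 : ¬ (d - 1 = 0) := by omega
  have hd1d : ¬ (d - 1 = d) := by omega
  have hdR : (3 : ℝ) ≤ d := by exact_mod_cast hd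
  have hs0 : ∑ i ∈ Finset.range (d + 1), (if i = 0 then (2 : ℝ) else 0) = 2 := by simp
  have hsd : ∑ i ∈ Finset.range (d + 1), (if i = d then (2 : ℝ) else 0) = 2 := by simp
  rcases v with ⟨j, hj⟩ | b | b
  · have e : ∀ u : BV d k, dl u (.inl ⟨j, hj⟩) = Sum.elim (fun i : Fin (d + 1) =>
        (fun i : ℕ => |(i : ℝ) - j|) i)
        (Sum.elim (fun _ => (j : ℝ) + if j = 0 then 2 else 0)
          (fun _ => (d : ℝ) - j + if j = d then 2 else 0)) u := by
      rintro (i | a | a) <;> rfl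
    simp only [e]
    rw [sum_deg hd (fun i : ℕ => |(i : ℝ) - j|)]
    obtain ⟨c, rfl⟩ : ∃ c, d = j + c := ⟨d - j, by omega⟩
    rw [sum_abs_range]
    simp only [Dc, Ec, ps, hd1, Finset.sum_const, Finset.card_univ, Fintype.card_fin,
      nsmul_eq_mul]
    have hj0 : (0 : ℝ) ≤ j := by positivity
    have he0 : (0 : ℝ) ≤ c := by positivity
    push_cast
    rw [abs_of_nonpos (show (0 : ℝ) - j ≤ 0 by linarith),
      abs_of_nonneg (show (0 : ℝ) ≤ (j : ℝ) + c - j by linarith)]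
    rcases Nat.eq_zero_or_pos j with rfl | h
    · rw [abs_of_nonneg (by norm_num), abs_of_nonneg (by push_cast at hdR ⊢; linarith)]
      simp only [h0d, if_true, if_false]
      push_cast; ring
    · have h1 : (1 : ℝ) ≤ j := by exact_mod_cast h
      have h2 : ¬ (j = 0) := by omega
      rw [abs_of_nonpos (by linarith)]
      rcases Nat.eq_zero_or_pos c with rfl | h'
      · rw [abs_of_nonpos (by push_cast; linarith)]
        simp only [h2, add_zero, if_true, if_false]
        push_cast; ring
      · have h1' : (1 : ℝ) ≤ c := by exact_mod_cast h'
        have h2' : ¬ (j = j + c) := by omega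
        rw [abs_of_nonneg (by linarith)]
        simp only [h2, h2', if_false]
        ring
  · have e : ∀ u : BV d k, dl u (.inr (.inl b)) = Sum.elim (fun i : Fin (d + 1) =>
        (fun i : ℕ => (i : ℝ) + if i = 0 then 2 else 0) i)
        (Sum.elim (fun a => if a = b then 0 else 2) (fun _ => (d : ℝ))) u := by
      rintro (i | a | a) <;> rfl
    simp only [e]
    rw [sum_deg hd (fun i : ℕ => (i : ℝ) + if i = 0 then 2 else 0), sum_ite_two,
      Finset.sum_add_distrib, hs0, sum_id_range]
    simp only [Dc, Ec, ps, hd1, Finset.sum_const, Finset.card_univ, Fintype.card_fin,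
      nsmul_eq_mul, h0d, hd0, hd10, one_ne_zero, if_true, if_false]
    push_cast; ring
  · have e : ∀ u : BV d k, dl u (.inr (.inr b)) = Sum.elim (fun i : Fin (d + 1) =>
        (fun i : ℕ => (d : ℝ) - i + if i = d then 2 else 0) i)
        (Sum.elim (fun _ => (d : ℝ)) (fun a => if a = b then 0 else 2)) u := by
      rintro (i | a | a) <;> rfl
    simp only [e]
    rw [sum_deg hd (fun i : ℕ => (d : ℝ) - i + if i = d then 2 else 0), sum_ite_two,
      Finset.sum_add_distrib, hsd, Finset.sum_sub_distrib, sum_id_range]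
    simp only [Dc, Ec, ps, hd1, Finset.sum_const, Finset.card_univ, Fintype.card_fin,
      Finset.card_range, nsmul_eq_mul, h0d, hd0, h1d, hd1d, if_true, if_false]
    push_cast; ring

/-- The tree formula `H(u,v) = |E| dist(u,v) + (D(v) - D(u)) / 2`. -/
lemma hit_B (hd : 3 ≤ d) (u v : BV d k) :
    hit (B d k) u v = (d + 2 * k) * dl u v + (Dc v - Dc u) / 2 := by
  refine hit_eq (B d k) v (fun u => (d + 2 * k) * dl u v + (Dc v - Dc u) / 2) ?_ ?_ u
  · simp [dl_self]
  · intro u huv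
    have hp := deg_pos (k := k) hd u
    have e : (∑ w, if (B d k).Adj u w then (d + 2 * k) * dl w v + (Dc v - Dc w) / 2 else 0)
        = (d + 2 * k) * nbr u (fun w => dl w v) + (Dc v / 2) * nbr u (fun _ => 1)
          - nbr u Dc / 2 := by
      simp only [nbr, Finset.mul_sum, Finset.sum_div]
      rw [← Finset.sum_add_distrib, ← Finset.sum_sub_distrib]
      refine Finset.sum_congr rfl fun w _ => ?_
      split_ifs <;> ring
    rw [step_sum, e, nbr_dl hd u v huv, nbr_Dc hd u, ← deg_eq_nbr]
    field_simp
    ring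

/-- The mean of `Dc` under the stationary distribution. -/
noncomputable def Kc (d k : ℕ) : ℝ := ∑ u : BV d k, statPr (B d k) u * Dc u

lemma hitPi_B (hd : 3 ≤ d) (v : BV d k) : hitPi (B d k) v = Dc v - Kc d k / 2 := by
  have hm : (0 : ℝ) < d + 2 * k := by
    have : (0 : ℝ) < d := by exact_mod_cast (by omega : 0 < d)
    positivity
  have e : hitPi (B d k) v = (∑ u, (deg (B d k) u : ℝ) * dl u v) / 2
      + (∑ u, (deg (B d k) u : ℝ)) / (2 * (d + 2 * k)) * (Dc v / 2) - Kc d k / 2 := by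
    simp only [hitPi, Kc, Finset.sum_div, Finset.sum_mul]
    rw [← Finset.sum_add_distrib, ← Finset.sum_sub_distrib]
    refine Finset.sum_congr rfl fun u _ => ?_
    rw [hit_B hd, statPr, numEdges_eq hd]
    field_simp
    ring
  rw [e, sum_deg_dl hd, sum_deg_one hd]
  field_simp
  ring

lemma sum_sq_range (c : ℝ) (N : ℕ) : ∑ i ∈ Finset.range N, ((i : ℝ) ^ 2 + (c - i) ^ 2)
    = N * (N - 1) * (2 * N - 1) / 3 - c * N * (N - 1) + N * c ^ 2 := by
  induction N with
  | zero => simp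
  | succ N ih => rw [Finset.sum_range_succ, ih]; push_cast; ring

lemma Kc_eq (hd : 3 ≤ d) : (d + 2 * k : ℝ) * (Kc d k / 2 - 2 * k)
    = ((d : ℝ) + 2 * k) * (((d : ℝ) - 2) * (d + 2 * k + 1) - d + 5) / 2
      - ((d : ℝ) ^ 3 - 6 * (d : ℝ) ^ 2 + 8 * (d : ℝ)) / 6 := by
  have hm : (0 : ℝ) < d + 2 * k := by
    have : (0 : ℝ) < d := by exact_mod_cast (by omega : 0 < d)
    positivity
  have hd1 : ((d - 1 : ℕ) : ℝ) = d - 1 := by rw [Nat.cast_sub (by omega)]; simp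
  have h0d : ¬ (0 = d) := by omega
  have hd0 : ¬ (d = 0) := by omega
  have h1d : ¬ (1 = d) := by omega
  have hd10 : ¬ (d - 1 = 0) := by omega
  have hd1d : ¬ (d - 1 = d) := by omega
  have e : ∀ u : BV d k, Dc u = Sum.elim (fun i : Fin (d + 1) => (Ec d k) i)
      (Sum.elim (fun _ => Ec d k 0) (fun _ => Ec d k d)) u := by
    rintro (i | a | a) <;> rfl
  have hE : ∑ i ∈ Finset.range (d + 1), Ec d k i
      = (d + 1) * (2 * k * (d - 1)) + ((d + 1) * d * (2 * d + 1) / 3 - d * (d + 1) * d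
        + (d + 1) * (d : ℝ) ^ 2) + 8 * k := by
    have h1 : ∀ i : ℕ, Ec d k i = 2 * k * (d - 1) + ((i : ℝ) ^ 2 + ((d : ℝ) - i) ^ 2)
        + (if i = 0 then 4 * (k : ℝ) else 0) + if i = d then 4 * (k : ℝ) else 0 := by
      intro i; simp only [Ec]; ring
    simp only [h1, Finset.sum_add_distrib (f := fun i : ℕ => _ + _ + _),
      Finset.sum_add_distrib (f := fun i : ℕ => _ + _)]
    rw [Finset.sum_add_distrib, sum_sq_range]
    simp
    ring
  have hK : Kc d k * (2 * (d + 2 * k)) = ∑ u : BV d k, (deg (B d k) u : ℝ) * Dc u := by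
    rw [Kc, Finset.sum_mul]
    refine Finset.sum_congr rfl fun u _ => ?_
    rw [statPr, numEdges_eq hd]
    field_simp
  simp only [e] at hK
  rw [sum_deg hd (Ec d k), hE] at hK
  simp only [Ec, hd1, Finset.sum_const, Finset.card_univ, Fintype.card_fin,
      nsmul_eq_mul, h0d, hd0, h1d, hd10, hd1d, one_ne_zero, if_true, if_false] at hK
  push_cast at hK
  linear_combination hK / 4

/-! ### The extremal pair -/

/-- The distance is the difference of the positions, except for two leaves on the same side. -/
lemma dl_le (w v : BV d k) : dl w v ≤ |(ps w : ℝ) - ps v| ∨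
    (ps w = ps v ∧ dl w v ≤ 2 ∧ (ps w = 0 ∨ ps w = d)) := by
  have aux : ∀ x : ℕ, x < d + 1 → |(x : ℝ) - d| = d - x ∧ |(d : ℝ) - x| = d - x := by
    intro x hx
    have : (x : ℝ) ≤ d := by exact_mod_cast (by omega : x ≤ d)
    exact ⟨by rw [abs_of_nonpos (by linarith)]; ring, by rw [abs_of_nonneg (by linarith)]⟩
  rcases w with ⟨i, hi⟩ | a | a <;> rcases v with ⟨j, hj⟩ | b | b
  · left; simp [dl, ps]
  · by_cases h : i = 0
    · right; simp [dl, ps, h]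
    · left; simp [dl, ps, h]
  · by_cases h : i = d
    · right; simp [dl, ps, h]
    · left; simp [dl, ps, h, aux i hi]
  · by_cases h : j = 0
    · right; simp [dl, ps, h]
    · left; simp [dl, ps, h]
  · right; simp only [dl, ps]; refine ⟨trivial, ?_, Or.inl trivial⟩; split_ifs <;> norm_num
  · left; simp [dl, ps]
  · by_cases h : j = d
    · right; simp [dl, ps, h]
    · left; simp [dl, ps, h, aux j hj]
  · left; simp [dl, ps]
  · right; simp only [dl, ps]; refine ⟨trivial, ?_, Or.inr trivial⟩; split_ifs <;> norm_num

lemma ps_le (v : BV d k) : ps v ≤ d := by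
  rcases v with i | a | a
  · exact Nat.lt_succ_iff.mp i.2
  · exact Nat.zero_le _
  · exact le_rfl

/-- Without the terms in `k` the left side is `-(d - q) ^ 2 - p ^ 2`, attained as `0` at the two
end leaves; moving either vertex inwards loses at least `2 k` in the distance term for every step
and saves only `2 k` in the leaf correction of `Ec`. -/
lemma E_le (hd : 3 ≤ d) (p q : ℕ) (hpq : p ≤ q) (hq : q ≤ d) :
    ((d : ℝ) + 2 * k) * ((q : ℝ) - p) - (Ec d k p + Ec d k q) / 2 ≤ -2 * k := by
  have h0d : ¬ (0 = d) := by omega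
  have hd0 : ¬ (d = 0) := by omega
  have hk : (0 : ℝ) ≤ k := by positivity
  have hdR : (3 : ℝ) ≤ d := by exact_mod_cast hd
  have hkd := mul_nonneg hk (show (0 : ℝ) ≤ d - 3 by linarith)
  by_cases hp0 : p = 0
  · subst hp0
    by_cases hq0 : q = 0
    · subst hq0
      simp only [Ec, h0d, if_true, if_false]
      push_cast
      nlinarith
    · by_cases hqd : q = d
      · subst hqd
        simp only [Ec, h0d, hd0, if_true, if_false]
        push_cast
        nlinarith
      · have h : (q : ℝ) ≤ d - 1 := by
          have : (q : ℝ) + 1 ≤ d := by exact_mod_cast (by omega : q + 1 ≤ d)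
          linarith
        simp only [Ec, h0d, hq0, hqd, if_true, if_false]
        push_cast
        nlinarith [mul_nonneg hk (sub_nonneg.2 h), sq_nonneg ((d : ℝ) - q)]
  · have hp : (1 : ℝ) ≤ p := by exact_mod_cast (by omega : 1 ≤ p)
    have hq0 : ¬ (q = 0) := by omega
    by_cases hqd : q = d
    · subst hqd
      by_cases hpd : p = q
      · subst hpd
        simp only [Ec, hp0, if_true, if_false]
        nlinarith
      · simp only [Ec, hp0, hd0, hpd, if_true, if_false]
        nlinarith [mul_nonneg hk (sub_nonneg.2 hp), sq_nonneg (p : ℝ)]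
    · have hpd : ¬ (p = d) := by omega
      have h : (q : ℝ) ≤ d - 1 := by
        have : (q : ℝ) + 1 ≤ d := by exact_mod_cast (by omega : q + 1 ≤ d)
        linarith
      simp only [Ec, hp0, hpd, hq0, hqd, if_false]
      nlinarith [mul_nonneg hk (sub_nonneg.2 h), mul_nonneg hk (sub_nonneg.2 hp),
        sq_nonneg ((d : ℝ) - q), sq_nonneg (p : ℝ)]

lemma F_le (hd : 3 ≤ d) (w v : BV d k) :
    (d + 2 * k) * dl w v - (Dc v + Dc w) / 2 ≤ -2 * k := by
  have hm : (0 : ℝ) ≤ d + 2 * k := by positivity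
  rcases dl_le w v with h | ⟨hps, h2, hleaf⟩
  · have h1 := mul_le_mul_of_nonneg_left h hm
    rcases le_total (ps w) (ps v) with hle | hle
    · have h3 := E_le (k := k) hd _ _ hle (ps_le v)
      have h4 : (ps w : ℝ) ≤ ps v := by exact_mod_cast hle
      rw [abs_of_nonpos (by linarith), neg_sub] at h1
      simp only [Dc]
      linarith
    · have h3 := E_le (k := k) hd _ _ hle (ps_le w)
      have h4 : (ps v : ℝ) ≤ ps w := by exact_mod_cast hle
      rw [abs_of_nonneg (by linarith)] at h1
      simp only [Dc]
      linarith
  · have h1 := mul_le_mul_of_nonneg_left h2 hm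
    have h0d : ¬ (0 = d) := by omega
    have hd0 : ¬ (d = 0) := by omega
    have hk : (0 : ℝ) ≤ k := by positivity
    have hdR : (3 : ℝ) ≤ d := by exact_mod_cast hd
    have hkd := mul_nonneg hk (show (0 : ℝ) ≤ d - 3 by linarith)
    simp only [Dc, ← hps]
    rcases hleaf with hl | hl <;> rw [hl] <;> simp only [Ec, h0d, hd0, if_true, if_false] <;>
      push_cast <;> nlinarith

/-- Substituting the tree formula, `hit w v - H(π,v) = |E| dist(w,v) - (D(v) + D(w)) / 2 + K / 2`,
so `F_le` bounds the mixing time, with equality for the two ends of the diametral path. -/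
lemma Tmix_B (hd : 3 ≤ d) : Tmix (B d k) = Kc d k / 2 - 2 * k := by
  apply le_antisymm
  · refine ciSup_le fun v => ?_
    rw [mixFrom, sub_le_iff_le_add]
    refine ciSup_le fun w => ?_
    rw [hit_B hd, hitPi_B hd]
    have := F_le hd w v
    linarith
  · refine le_trans ?_ (le_ciSup (Set.finite_range _).bddAbove (.inl ⟨0, by omega⟩))
    rw [mixFrom, le_sub_iff_add_le]
    refine le_trans ?_ (le_ciSup (Set.finite_range _).bddAbove (.inl ⟨d, by omega⟩))
    rw [hit_B hd, hitPi_B hd]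
    have h1 : ¬ (0 = d) := by omega
    have h2 : ¬ (d = 0) := by omega
    have h3 : (0 : ℝ) ≤ d := by positivity
    simp only [dl, Dc, Ec, ps, h1, h2, if_true, if_false]
    rw [abs_of_nonneg (by simp)]
    push_cast
    nlinarith

end

lemma Tmix_balanced (n d k ℓ r : ℕ) (hd : 3 ≤ d) (hn : n = d + 2 * k + 1) (hl : ℓ = k + 1)
    (hr : r = k + 1) : Tmix (doubleBroom d ℓ r) =
      (((d : ℝ) - 2) * (n : ℝ) - (d : ℝ) + 5) / 2 -
        ((d : ℝ) ^ 3 - 6 * (d : ℝ) ^ 2 + 8 * (d : ℝ)) / (6 * ((n : ℝ) - 1)) := by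
  subst hn hl hr
  have hm : (0 : ℝ) < d + 2 * k := by
    have : (0 : ℝ) < d := by exact_mod_cast (by omega : 0 < d)
    positivity
  refine (Tmix_B (k := k) hd).trans ?_
  have h := Kc_eq (k := k) hd
  push_cast
  rw [add_sub_cancel_right]
  refine mul_left_cancel₀ hm.ne' (h.trans ?_)
  field_simp

/-- if `n - d` is odd, then
`T_mix(D_{n,d}) = ((d-2)n - d + 5)/2 - (d³ - 6d² + 8d)/(6(n-1))`. -/
theorem stmt1 (n d : ℕ) (hd3 : 3 ≤ d) (hdn : d ≤ n - 1) (hpar : Odd (n - d)) :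
    Tmix (balancedDB n d) =
      (((d : ℝ) - 2) * (n : ℝ) - (d : ℝ) + 5) / 2 -
        ((d : ℝ) ^ 3 - 6 * (d : ℝ) ^ 2 + 8 * (d : ℝ)) / (6 * ((n : ℝ) - 1)) := by
  obtain ⟨k, hk⟩ := hpar
  exact Tmix_balanced n d k _ _ hd3 (by omega) (by omega) (by omega)

end RWMix
end

section
/- For all n and d with 3 ≤ d ≤ n−1 such that n−d is even, the mixing time of the balanced double broom satisfies T_mix(D_{n,d}) = ((d−2)n − d + 5)/2 − (d³ − 6d² + 11d − 6)/(6(n−1)). -/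
/-!
For a target `v` on a finite graph, the expected hitting times `u ↦ H(u,v)` are the only
nonnegative solution of the first-step equations vanishing at `v` (`IsHit.hit_eq`). Testing the
equations of two targets against each other and using reversibility shows that
`S(x,y) = H(x,y) - H(π,y)` is symmetric (`access_symm`), and the mixing time is the maximum
of `S` over all pairs.

On the double broom every hitting-time function is explicit. For an inner spine vertex at
position `j`, `H(u,j)` depends only on the position of `u` and grows away from `j`, so it is
maximal at one of the two ends (`hfun_isHit`, `hfun_le`). For an end leaf, all times to its
neighbor are shifted by `2|E| - 1` (`IsHit.leaf`), and the farthest vertex is the opposite end of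
the broom. Hence `S(w,v) ≤ max (S(v_0,v), S(v_d,v))`, and by symmetry each of these is at most
`S(v_0,v_d)` (`Tmix_eq`, `Tmix_broom`). What remains is the evaluation of
`H(v_0,v_d) - H(π,v_d)`, a sum of a quadratic polynomial along the spine (`access_end`, `sum_fwd`).
This works for arbitrary numbers `ℓ, r ≥ 1` of leaves; the parity of `n - d` only enters through
`ℓ = m + 1`, `r = m` where `n = d + 2m`.
-/

open scoped Classical

namespace RWMix

/-! ### Hitting times as solutions of a linear system -/

/-- The sum of `f` over the neighbors of `u`. -/
noncomputable def nbrSum {V : Type*} [Fintype V] (G : SimpleGraph V) (u : V) (f : V → ℝ) : ℝ :=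
  ∑ w, if G.Adj u w then f w else 0

/-- `h` solves the first-step equations for the expected hitting time of `v`, written
without division: `∑_{w ∼ u} h w = deg u * (h u - 1)` for `u ≠ v`, with `h v = 0`. -/
structure IsHit {V : Type*} [Fintype V] (G : SimpleGraph V) (v : V) (h : V → ℝ) : Prop where
  zero : h v = 0
  nonneg : ∀ u, 0 ≤ h u
  eq : ∀ u, u ≠ v → nbrSum G u h = deg G u * (h u - 1)

section General

variable {V : Type*} [Fintype V] {G : SimpleGraph V}

lemma deg_eq (u : V) : (deg G u : ℝ) = nbrSum G u (fun _ => 1) := by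
  unfold deg nbrSum
  rw [Nat.card_eq_fintype_card, Fintype.card_subtype]
  simp

lemma sum_deg_s2 : ∑ u, (deg G u : ℝ) = 2 * (numEdges G : ℝ) := by
  have h := G.sum_degrees_eq_twice_card_edges
  have h1 : numEdges G = G.edgeFinset.card := by
    unfold numEdges
    rw [Nat.card_eq_fintype_card, SimpleGraph.edgeFinset_card]
  have h2 : ∀ u, deg G u = G.degree u := by
    intro u
    unfold deg
    rw [Nat.card_eq_fintype_card, ← SimpleGraph.card_neighborSet_eq_degree]
    rfl
  rw [h1]
  simp_rw [h2]
  exact_mod_cast h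

/-- Summation by parts: the adjacency operator is self-adjoint. -/
lemma nbrSum_symm (f g : V → ℝ) :
    ∑ u, f u * nbrSum G u g = ∑ u, g u * nbrSum G u f := by
  unfold nbrSum
  simp_rw [Finset.mul_sum]
  rw [Finset.sum_comm]
  refine Finset.sum_congr rfl fun u _ => Finset.sum_congr rfl fun w _ => ?_
  rw [G.adj_comm w u]
  split_ifs <;> ring

lemma nbrSum_const (u : V) (c : ℝ) : nbrSum G u (fun _ => c) = deg G u * c := by
  rw [deg_eq]
  unfold nbrSum
  rw [Finset.sum_mul]
  refine Finset.sum_congr rfl fun w _ => ?_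
  split_ifs <;> ring

lemma nbrSum_add (u : V) (f g : V → ℝ) :
    nbrSum G u (fun w => f w + g w) = nbrSum G u f + nbrSum G u g := by
  unfold nbrSum
  rw [← Finset.sum_add_distrib]
  refine Finset.sum_congr rfl fun w _ => ?_
  split_ifs <;> ring

lemma nbrSum_single [DecidableEq V] (u v : V) (c : ℝ) :
    nbrSum G u (fun w => if w = v then c else 0) = if G.Adj u v then c else 0 := by
  unfold nbrSum
  rw [Finset.sum_eq_single v]
  · simp
  · intro b _ hb
    simp [hb]
  · simp

variable [DecidableEq V]

/-- The first-step equation at the target itself has the extra term `2|E|`; this is the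
expected return time `2|E| / deg v`. -/
lemma IsHit.eq_all {v : V} {h : V → ℝ} (H : IsHit G v h) (u : V) :
    nbrSum G u h = deg G u * (h u - 1) + if u = v then 2 * (numEdges G : ℝ) else 0 := by
  by_cases huv : u = v
  · subst huv
    have h1 := nbrSum_symm (G := G) (fun _ => 1) h
    have h2 : ∀ w, h w * nbrSum G w (fun _ => 1) - 1 * nbrSum G w h =
        deg G w + if w = u then - deg G u - nbrSum G u h else 0 := by
      intro w
      rw [← deg_eq]
      by_cases hw : w = u
      · subst hw
        simp [H.zero]
        ring
      · rw [H.eq w hw]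
        simp [hw]
        ring
    have h3 := Finset.sum_congr rfl fun w (_ : w ∈ Finset.univ) => h2 w
    rw [Finset.sum_sub_distrib, ← h1, Finset.sum_add_distrib, sum_deg_s2] at h3
    simp only [Finset.sum_ite_eq', Finset.mem_univ, if_true] at h3
    simp only [H.zero, if_true]
    linarith
  · simp [huv, H.eq u huv]

/-- Moving the target from `w` to an adjacent leaf `v`: all other hitting times grow by
`H(w,v) = 2|E| - 1`. -/
lemma IsHit.leaf {w v : V} {h : V → ℝ} (H : IsHit G w h) (hvw : G.Adj v w)
    (hv : deg G v = 1) (hE : 1 ≤ 2 * (numEdges G : ℝ)) :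
    IsHit G v (fun u => if u = v then 0 else h u + (2 * (numEdges G : ℝ) - 1)) := by
  have hne : v ≠ w := hvw.ne
  have hcard : ∀ x, G.Adj v x → x = w := by
    intro x hx
    have : Subsingleton {x // G.Adj v x} :=
      (Nat.card_eq_one_iff_unique.mp hv).1
    exact congrArg Subtype.val (Subsingleton.elim (⟨x, hx⟩ : {x // G.Adj v x}) ⟨w, hvw⟩)
  have hhv : h v = 1 := by
    have h1 := H.eq v hne
    have h2 : nbrSum G v h = 0 := by
      unfold nbrSum
      refine Finset.sum_eq_zero fun x _ => ?_
      split_ifs with hx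
      · rw [hcard x hx, H.zero]
      · rfl
    rw [h2, hv] at h1
    push_cast at h1
    linarith
  refine ⟨by simp, fun u => ?_, fun u hu => ?_⟩
  · have := H.nonneg u
    split_ifs
    · exact le_rfl
    · linarith
  · have e : (fun u => if u = v then 0 else h u + (2 * (numEdges G : ℝ) - 1)) =
        fun u => (h u + (2 * (numEdges G : ℝ) - 1)) +
          if u = v then - (2 * (numEdges G : ℝ)) else 0 := by
      funext x
      by_cases hx : x = v
      · subst hx
        simp [hhv]
      · simp [hx]
    have hadj : G.Adj u v ↔ u = w :=
      ⟨fun hx => hcard u hx.symm, fun hx => hx ▸ hvw.symm⟩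
    rw [e, nbrSum_add, nbrSum_add, nbrSum_const, nbrSum_single, H.eq_all]
    simp only [hadj, hu, if_false]
    split_ifs <;> ring

/-- Iterating `h = g + K h`, where `K` is the killed walk and `g` the indicator of the complement
of `v`, gives `h = ∑_{t<T} K^t g + K^T h`. The partial sums are bounded by `h`, so `K^T g → 0`,
and `h ≤ C g` then forces the remainder to vanish. -/
lemma IsHit.hit_eq {v : V} {h : V → ℝ} (H : IsHit G v h) (hdeg : ∀ u, 0 < deg G u) (u : V) :
    hit G u v = h u := by
  set K := killed G v with hK
  set g : V → ℝ := fun w => if w = v then (0 : ℝ) else 1 with hg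
  have hstep : h = g + K.mulVec h := by
    funext x
    simp only [Pi.add_apply, Matrix.mulVec, dotProduct, hK, killed, step, Matrix.of_apply, hg]
    by_cases hx : x = v
    · subst hx
      simp [H.zero]
    · have h1 := H.eq x hx
      have hd : (deg G x : ℝ) ≠ 0 := by exact_mod_cast (hdeg x).ne'
      have h2 : ∑ w, (if G.Adj x w then ((deg G x : ℝ))⁻¹ else 0) * h w =
          ((deg G x : ℝ))⁻¹ * nbrSum G x h := by
        unfold nbrSum
        rw [Finset.mul_sum]
        refine Finset.sum_congr rfl fun w _ => ?_
        split_ifs <;> ring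
      simp only [hx, if_false]
      rw [h2, h1]
      field_simp
      ring
  have hKnn : ∀ x y, 0 ≤ K x y := by
    intro x y
    simp only [hK, killed, step, Matrix.of_apply]
    split_ifs <;> positivity
  have hKt : ∀ (t : ℕ) x y, 0 ≤ (K ^ t) x y := by
    intro t
    induction t with
    | zero =>
      intro x y
      rw [pow_zero, Matrix.one_apply]
      split_ifs <;> norm_num
    | succ t ih =>
      intro x y
      rw [pow_succ, Matrix.mul_apply]
      exact Finset.sum_nonneg fun z _ => mul_nonneg (ih x z) (hKnn z y)
  have hgnn : ∀ x, 0 ≤ g x := by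
    intro x
    simp only [hg]
    split_ifs <;> norm_num
  have hmv : ∀ (t : ℕ) (f : V → ℝ), (∀ x, 0 ≤ f x) → 0 ≤ (K ^ t).mulVec f u := fun t f hf =>
    Finset.sum_nonneg fun z _ => mul_nonneg (hKt t u z) (hf z)
  have hiter : ∀ T : ℕ,
      h u = ∑ t ∈ Finset.range T, (K ^ t).mulVec g u + (K ^ T).mulVec h u := by
    intro T
    induction T with
    | zero => simp
    | succ T ih =>
      rw [Finset.sum_range_succ, ih]
      have : (K ^ T).mulVec h = (K ^ T).mulVec g + (K ^ (T + 1)).mulVec h := by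
        conv_lhs => rw [hstep]
        rw [Matrix.mulVec_add, Matrix.mulVec_mulVec, pow_succ]
      rw [this, Pi.add_apply]
      ring
  have hsum : Summable fun t => (K ^ t).mulVec g u := by
    refine summable_of_sum_range_le (c := h u) (fun t => hmv t g hgnn) fun T => ?_
    have := hiter T
    have := hmv T h H.nonneg
    linarith
  have h0 := hsum.tendsto_atTop_zero
  set C := ∑ x, h x with hC
  have hbound : ∀ x, h x ≤ C * g x := by
    intro x
    by_cases hx : x = v
    · simp [hx, hg, H.zero]
    · simp only [hg, hx, if_false, mul_one, hC]
      exact Finset.single_le_sum (fun y _ => H.nonneg y) (Finset.mem_univ x)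
  have hrem : Filter.Tendsto (fun T : ℕ => (K ^ T).mulVec h u) Filter.atTop (nhds 0) := by
    refine squeeze_zero (fun T => hmv T h H.nonneg) (fun T => ?_)
      (by simpa using h0.const_mul C)
    simp only [Matrix.mulVec, dotProduct]
    rw [Finset.mul_sum]
    refine Finset.sum_le_sum fun z _ => ?_
    have := mul_le_mul_of_nonneg_left (hbound z) (hKt T u z)
    linarith
  have hlim : Filter.Tendsto (fun T : ℕ => ∑ t ∈ Finset.range T, (K ^ t).mulVec g u)
      Filter.atTop (nhds (h u)) := by
    have h1 := (tendsto_const_nhds (x := h u)).sub hrem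
    rw [sub_zero] at h1
    refine h1.congr fun T => ?_
    have := hiter T
    linarith
  exact tendsto_nhds_unique hsum.hasSum.tendsto_sum_nat hlim

lemma hitPi_eq (v : V) :
    hitPi G v = (∑ u, (deg G u : ℝ) * hit G u v) / (2 * (numEdges G : ℝ)) := by
  unfold hitPi statPr
  rw [Finset.sum_div]
  exact Finset.sum_congr rfl fun u _ => by ring

/-- `H(x,y) - H(π,y)` is symmetric in `x` and `y`: test the equation of each hitting-time
function against the other and use reversibility. -/
lemma access_symm {x y : V} {hx hy : V → ℝ} (Hx : IsHit G x hx) (Hy : IsHit G y hy)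
    (hdeg : ∀ u, 0 < deg G u) (hE : 0 < (numEdges G : ℝ)) :
    hit G y x - hitPi G x = hit G x y - hitPi G y := by
  have h1 := nbrSum_symm (G := G) hx hy
  simp_rw [Hx.eq_all, Hy.eq_all] at h1
  simp_rw [mul_add, Finset.sum_add_distrib] at h1
  simp only [mul_ite, mul_zero, Finset.sum_ite_eq', Finset.mem_univ, if_true] at h1
  have h2 : ∑ u, hx u * (deg G u * (hy u - 1)) =
      ∑ u, hx u * (deg G u * hy u) - ∑ u, deg G u * hx u := by
    rw [← Finset.sum_sub_distrib]
    exact Finset.sum_congr rfl fun u _ => by ring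
  have h3 : ∑ u, hy u * (deg G u * (hx u - 1)) =
      ∑ u, hx u * (deg G u * hy u) - ∑ u, deg G u * hy u := by
    rw [← Finset.sum_sub_distrib]
    exact Finset.sum_congr rfl fun u _ => by ring
  rw [h2, h3] at h1
  rw [hitPi_eq, hitPi_eq]
  simp_rw [Hx.hit_eq hdeg, Hy.hit_eq hdeg]
  field_simp
  linarith

/-- If for every target a farthest vertex can be chosen among `p` and `q`, and `p`, `q` are
farthest from each other, then by symmetry of the access times `(p, q)` realizes the mixing
time. -/
lemma Tmix_eq {p q : V} (hex : ∀ v, ∃ h, IsHit G v h)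
    (hdeg : ∀ u, 0 < deg G u) (hE : 0 < (numEdges G : ℝ))
    (hmax : ∀ w v, hit G w v ≤ max (hit G p v) (hit G q v))
    (hp : ∀ w, hit G w p ≤ hit G q p) (hq : ∀ w, hit G w q ≤ hit G p q) :
    Tmix G = hit G p q - hitPi G q := by
  have symm : ∀ x y, hit G y x - hitPi G x = hit G x y - hitPi G y := fun x y => by
    obtain ⟨hx, Hx⟩ := hex x
    obtain ⟨hy, Hy⟩ := hex y
    exact access_symm Hx Hy hdeg hE
  have key : ∀ w v, hit G w v - hitPi G v ≤ hit G p q - hitPi G q := by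
    intro w v
    rcases le_max_iff.mp (hmax w v) with h | h
    · have := symm v p
      have := hp v
      have := symm p q
      linarith
    · have := symm v q
      have := hq v
      linarith
  have : Nonempty V := ⟨p⟩
  unfold Tmix mixFrom
  refine le_antisymm (ciSup_le fun v => ?_) ?_
  · rw [sub_le_iff_le_add]
    exact ciSup_le fun w => by linarith [key w v]
  · refine le_trans ?_ (le_ciSup (Set.finite_range _).bddAbove q)
    have := le_ciSup (f := fun w => hit G w q) (Set.finite_range _).bddAbove p
    linarith

end General

/-! ### The double broom as a weighted path -/

/-- The position of a vertex of the double broom along the spine; extra leaves sit at `0`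
and `d`, like the leaves `v_0` and `v_d` that they are equivalent to. -/
def pos (d : ℕ) {a b : ℕ} : (Fin (d+1) ⊕ Fin a ⊕ Fin b) → ℕ
  | Sum.inl i => i
  | Sum.inr (Sum.inl _) => 0
  | Sum.inr (Sum.inr _) => d

/-- Number of neighbors at position `p - 1` of a vertex at position `p`. -/
noncomputable def cL (ℓ p : ℕ) : ℝ := if p = 0 then 0 else if p = 1 then ℓ else 1

/-- Number of neighbors at position `p + 1` of a vertex at position `p`. -/
noncomputable def cR (d r p : ℕ) : ℝ := if p = d then 0 else if p + 1 = d then r else 1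

lemma pos_le {d a b : ℕ} (u : Fin (d+1) ⊕ Fin a ⊕ Fin b) : pos d u ≤ d := by
  rcases u with i | i | i
  · exact Nat.lt_succ_iff.mp i.2
  · exact Nat.zero_le _
  · exact le_rfl

lemma sum_pos {d ℓ r : ℕ} (hℓ : 1 ≤ ℓ) (hr : 1 ≤ r) (F : ℕ → ℝ) :
    ∑ u : Fin (d+1) ⊕ Fin (ℓ-1) ⊕ Fin (r-1), F (pos d u) =
      ∑ p ∈ Finset.range (d+1), F p + ((ℓ : ℝ) - 1) * F 0 + ((r : ℝ) - 1) * F d := by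
  rw [Fintype.sum_sum_type, Fintype.sum_sum_type, Finset.sum_range]
  simp only [pos, Finset.sum_const, Finset.card_univ, Fintype.card_fin, nsmul_eq_mul]
  push_cast [hℓ, hr]
  ring

lemma sum_path (d i : ℕ) (hi : i ≤ d) (F : ℕ → ℝ) :
    ∑ j ∈ Finset.range (d+1), (if i + 1 = j ∨ j + 1 = i then F j else 0) =
      (if i = 0 then 0 else F (i - 1)) + (if i = d then 0 else F (i + 1)) := by
  have h : ∀ j, (if i + 1 = j ∨ j + 1 = i then F j else 0) =
      (if i = 0 then 0 else if j = i - 1 then F j else 0) + (if j = i + 1 then F j else 0) := by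
    intro j
    split_ifs <;> first | (exfalso; omega) | simp
  simp_rw [h]
  rw [Finset.sum_add_distrib]
  congr 1
  · split_ifs with h0
    · simp
    · rw [Finset.sum_ite_eq', if_pos (Finset.mem_range.mpr (by omega))]
  · rw [Finset.sum_ite_eq']
    split_ifs with h1 h2 h2 <;> first | rfl | (simp only [Finset.mem_range] at h1; omega)

lemma nbrSum_broom {d ℓ r : ℕ} (hd : 3 ≤ d) (hℓ : 1 ≤ ℓ) (hr : 1 ≤ r) (F : ℕ → ℝ)
    (u : Fin (d+1) ⊕ Fin (ℓ-1) ⊕ Fin (r-1)) :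
    nbrSum (doubleBroom d ℓ r) u (fun w => F (pos d w)) =
      cL ℓ (pos d u) * F (pos d u - 1) + cR d r (pos d u) * F (pos d u + 1) := by
  unfold nbrSum doubleBroom
  rw [Fintype.sum_sum_type, Fintype.sum_sum_type]
  beta_reduce
  rcases u with i | k | k
  · rw [show pos d (Sum.inl i : Fin (d+1) ⊕ Fin (ℓ-1) ⊕ Fin (r-1)) = i from rfl]
    unfold cL cR
    refine (congrArg (· + _) (?_ : _ = ∑ j ∈ Finset.range (d+1),
      (if (i : ℕ) + 1 = j ∨ j + 1 = i then F j else 0))).trans ?_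
    · rw [Finset.sum_range]
      refine Finset.sum_congr rfl fun j _ => ?_
      have : (SimpleGraph.fromRel (broomRel d (a := ℓ-1) (b := r-1))).Adj
        (Sum.inl i) (Sum.inl j) ↔ ((i : ℕ) + 1 = j ∨ (j : ℕ) + 1 = i) := by
        simp only [SimpleGraph.fromRel_adj, broomRel, ne_eq, Sum.inl.injEq, Fin.ext_iff]
        omega
      by_cases h : (i : ℕ) + 1 = j ∨ (j : ℕ) + 1 = i
      · rw [if_pos (this.2 h), if_pos h, pos]
      · rw [if_neg (fun h' => h (this.1 h')), if_neg h]
    rw [sum_path d i (by omega)]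
    simp only [SimpleGraph.fromRel_adj, broomRel, pos, ne_eq, reduceCtorEq, not_false_eq_true,
      true_and, false_or, Finset.sum_const, Finset.card_univ, Fintype.card_fin, nsmul_eq_mul]
    have hi := i.2
    rcases Nat.eq_zero_or_pos (i : ℕ) with h0 | h0
    · simp only [h0]
      rw [if_neg (by omega : ¬ 0 = d), if_neg (by omega : ¬ 0 = d), if_neg (by omega : ¬ 0 + 1 = d),
        if_neg (by omega : ¬ 0 = d - 1)]
      simp
    rcases eq_or_ne (i : ℕ) 1 with h0 | h0
    · simp only [h0]
      rw [if_neg (by omega : ¬ 1 = d), if_neg (by omega : ¬ 1 = d), if_neg (by omega : ¬ 1 + 1 = d),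
        if_neg (by omega : ¬ 1 = d - 1)]
      push_cast [hℓ, hr]
      simp
      ring
    have h0' : (i : ℕ) ≠ 0 := by omega
    rcases eq_or_ne (i : ℕ) d with h1 | h1
    · simp only [h1]
      rw [if_neg (by omega : ¬ d = 0), if_neg (by omega : ¬ d = 0), if_neg (by omega : ¬ d = 1),
        if_neg (by omega : ¬ d = 1), if_neg (by omega : ¬ d = d - 1)]
      simp
    simp only [h0, h1, h0', if_false]
    rcases eq_or_ne ((i : ℕ) + 1) d with h2 | h2
    · rw [if_pos (by omega : (i : ℕ) = d - 1), if_pos h2, h2]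
      push_cast [hr]
      ring
    · rw [if_neg (by omega : ¬ (i : ℕ) = d - 1), if_neg h2]
      ring
  · rw [show pos d (Sum.inr (Sum.inl k) : Fin (d+1) ⊕ Fin (ℓ-1) ⊕ Fin (r-1)) = 0 from rfl]
    unfold cL cR
    simp only [SimpleGraph.fromRel_adj, broomRel, pos, ne_eq, reduceCtorEq, not_false_eq_true,
      true_and, or_false, and_false, if_false, Finset.sum_const_zero, add_zero]
    rw [Fintype.sum_eq_single (⟨1, by omega⟩ : Fin (d+1))]
    · rw [if_neg (by omega : ¬ 0 = d), if_neg (by omega : ¬ 0 + 1 = d)]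
      simp
    · intro j hj
      rw [if_neg]
      intro h
      exact hj (Fin.ext h)
  · rw [show pos d (Sum.inr (Sum.inr k) : Fin (d+1) ⊕ Fin (ℓ-1) ⊕ Fin (r-1)) = d from rfl]
    unfold cL cR
    simp only [SimpleGraph.fromRel_adj, broomRel, pos, ne_eq, reduceCtorEq, not_false_eq_true,
      true_and, or_false, and_false, if_false, Finset.sum_const_zero, add_zero]
    rw [Fintype.sum_eq_single (⟨d - 1, by omega⟩ : Fin (d+1))]
    · rw [if_neg (by omega : ¬ d = 0), if_neg (by omega : ¬ d = 1)]
      simp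
    · intro j hj
      rw [if_neg]
      intro h
      exact hj (Fin.ext h)

lemma deg_broom {d ℓ r : ℕ} (hd : 3 ≤ d) (hℓ : 1 ≤ ℓ) (hr : 1 ≤ r)
    (u : Fin (d+1) ⊕ Fin (ℓ-1) ⊕ Fin (r-1)) :
    (deg (doubleBroom d ℓ r) u : ℝ) = cL ℓ (pos d u) + cR d r (pos d u) := by
  rw [deg_eq, nbrSum_broom hd hℓ hr (fun _ => 1)]
  ring

lemma deg_pos_s2 {d ℓ r : ℕ} (hd : 3 ≤ d) (hℓ : 1 ≤ ℓ) (hr : 1 ≤ r)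
    (u : Fin (d+1) ⊕ Fin (ℓ-1) ⊕ Fin (r-1)) : 0 < deg (doubleBroom d ℓ r) u := by
  have h := deg_broom hd hℓ hr u
  have hℓ' : (1 : ℝ) ≤ ℓ := by exact_mod_cast hℓ
  have hr' : (1 : ℝ) ≤ r := by exact_mod_cast hr
  have : (0 : ℝ) < deg (doubleBroom d ℓ r) u := by
    rw [h]
    unfold cL cR
    split_ifs <;> first | (exfalso; omega) | linarith
  exact_mod_cast this

/-- A degree-weighted sum of a function of the position, with the two ends split off. -/
lemma sum_deg_mul {e ℓ r : ℕ} (hℓ : 1 ≤ ℓ) (hr : 1 ≤ r) (F : ℕ → ℝ) :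
    ∑ u, (deg (doubleBroom (e+3) ℓ r) u : ℝ) * F (pos (e+3) u) =
      ℓ * F 0 + (ℓ + 1) * F 1 + ∑ k ∈ Finset.range e, 2 * F (k + 2) +
        (r + 1) * F (e + 2) + r * F (e + 3) := by
  simp_rw [deg_broom (by omega : 3 ≤ e + 3) hℓ hr]
  rw [sum_pos hℓ hr (fun p => (cL ℓ p + cR (e+3) r p) * F p)]
  rw [Finset.sum_range_succ, Finset.sum_range_succ, Finset.sum_range_succ', Finset.sum_range_succ']
  have h : ∀ k ∈ Finset.range e, (cL ℓ (k+1+1) + cR (e+3) r (k+1+1)) * F (k+1+1) =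
      2 * F (k+2) := by
    intro k hk
    have hk := Finset.mem_range.mp hk
    simp only [cL, cR]
    rw [if_neg (by omega), if_neg (by omega), if_neg (by omega), if_neg (by omega)]
    norm_num
  rw [Finset.sum_congr rfl h]
  simp [cL, cR]
  ring

lemma edges_broom {e ℓ r : ℕ} (hℓ : 1 ≤ ℓ) (hr : 1 ≤ r) :
    (numEdges (doubleBroom (e+3) ℓ r) : ℝ) = e + 1 + ℓ + r := by
  have h1 := sum_deg_s2 (G := doubleBroom (e+3) ℓ r)
  have h2 := sum_deg_mul (e := e) hℓ hr (fun _ => 1)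
  simp only [mul_one, h1, Finset.sum_const, Finset.card_range, nsmul_eq_mul] at h2
  linarith

/-! ### Explicit hitting times in the double broom -/

/-- `fwd ℓ p` is the hitting time of position `p` from `v_0`, for `p ≤ d - 1`. -/
noncomputable def fwd (ℓ p : ℕ) : ℝ :=
  if p = 0 then 0 else 1 + ((p : ℝ) - 1) * (2 * ℓ - 1 + p)

/-- Hitting time of the inner spine vertex at position `j` from a vertex at position `p`;
from the right of `j` it is the mirror image of the formula from the left. -/
noncomputable def hfun (d ℓ r j p : ℕ) : ℝ :=
  if p ≤ j then fwd ℓ j - fwd ℓ p else fwd r (d - j) - fwd r (d - p)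

lemma fwd_mono {ℓ p q : ℕ} (hℓ : 1 ≤ ℓ) (h : p ≤ q) : fwd ℓ p ≤ fwd ℓ q := by
  have hℓ' : (1 : ℝ) ≤ ℓ := by exact_mod_cast hℓ
  have h' : (p : ℝ) ≤ q := by exact_mod_cast h
  unfold fwd
  split_ifs with h1 h2 h2
  · exact le_rfl
  · have : (1 : ℝ) ≤ q := by exact_mod_cast Nat.one_le_iff_ne_zero.mpr h2
    have : 0 ≤ ((q : ℝ) - 1) * (2 * ℓ - 1 + q) := mul_nonneg (by linarith) (by linarith)
    linarith
  · omega
  · have : (1 : ℝ) ≤ p := by exact_mod_cast Nat.one_le_iff_ne_zero.mpr h1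
    have : ((p : ℝ) - 1) * (2 * ℓ - 1 + p) ≤ ((q : ℝ) - 1) * (2 * ℓ - 1 + q) := by
      apply mul_le_mul <;> linarith
    linarith

lemma one_le_fwd {ℓ p : ℕ} (hℓ : 1 ≤ ℓ) (h : 1 ≤ p) : 1 ≤ fwd ℓ p := by
  have := fwd_mono hℓ h
  simpa [fwd] using this

lemma hfun_nonneg {d ℓ r j : ℕ} (hℓ : 1 ≤ ℓ) (hr : 1 ≤ r) (p : ℕ) : 0 ≤ hfun d ℓ r j p := by
  unfold hfun
  split_ifs with h
  · linarith [fwd_mono hℓ h]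
  · linarith [fwd_mono hr (by omega : d - p ≤ d - j)]

lemma hfun_zero {d ℓ r j : ℕ} : hfun d ℓ r j 0 = fwd ℓ j := by
  simp [hfun, fwd]

lemma hfun_last {d ℓ r j : ℕ} (hj : j < d) : hfun d ℓ r j d = fwd r (d - j) := by
  simp [hfun, fwd, hj]

lemma hfun_le {d ℓ r j : ℕ} (hℓ : 1 ≤ ℓ) (hr : 1 ≤ r) (hj : j < d) (p : ℕ) :
    hfun d ℓ r j p ≤ max (hfun d ℓ r j 0) (hfun d ℓ r j d) := by
  rw [hfun_zero, hfun_last hj]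
  unfold hfun
  split_ifs with h
  · have := fwd_mono hℓ (Nat.zero_le p)
    simp only [fwd, if_true] at this
    exact le_max_of_le_left (by simp only [fwd]; linarith)
  · have := fwd_mono hr (Nat.zero_le (d - p))
    simp only [fwd, if_true] at this
    exact le_max_of_le_right (by simp only [fwd]; linarith)

/-- The forward equation for a vertex at position `p` to the left of the target. -/
lemma fwd_rec {ℓ p : ℕ} (c : ℝ) :
    cL ℓ p * (c - fwd ℓ (p - 1)) + (c - fwd ℓ (p + 1)) =
      (cL ℓ p + 1) * (c - fwd ℓ p - 1) := by
  rcases p with _ | _ | p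
  · simp [cL, fwd]
  · simp [cL, fwd]
    ring
  · simp [cL, fwd]
    ring

lemma hfun_isHit {d ℓ r : ℕ} (hd : 3 ≤ d) (hℓ : 1 ≤ ℓ) (hr : 1 ≤ r)
    (v : Fin (d+1)) (h1 : 1 ≤ (v : ℕ)) (h2 : (v : ℕ) < d) :
    IsHit (doubleBroom d ℓ r) (Sum.inl v) (fun u => hfun d ℓ r v (pos d u)) := by
  refine ⟨by simp [hfun, pos], fun u => hfun_nonneg hℓ hr _, fun u hu => ?_⟩
  have hne : pos d u ≠ v := by
    rcases u with i | i | i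
    · intro h
      exact hu (congrArg Sum.inl (Fin.ext h))
    · simp only [pos]
      omega
    · simp only [pos]
      omega
  have hle := pos_le u
  rw [nbrSum_broom hd hℓ hr, deg_broom hd hℓ hr]
  generalize pos d u = p at hne hle
  rcases lt_or_gt_of_ne hne with hlt | hgt
  · have e1 : cR d r p = 1 := by
      unfold cR
      rw [if_neg (by omega), if_neg (by omega)]
    have := fwd_rec (ℓ := ℓ) (p := p) (fwd ℓ v)
    unfold hfun
    rw [if_pos (by omega), if_pos (by omega), if_pos (by omega), e1]
    linarith
  · have e1 : cL ℓ p = 1 := by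
      unfold cL
      rw [if_neg (by omega), if_neg (by omega)]
    -- Reflect: position `p` becomes `d - p`, exchanging `cL` and `cR`.
    have e2 : cR d r p = cL r (d - p) := by
      unfold cL cR
      split_ifs <;> first | rfl | omega
    have := fwd_rec (ℓ := r) (p := d - p) (fwd r (d - v))
    have e3 : hfun d ℓ r v (p - 1) = fwd r (d - v) - fwd r (d - p + 1) := by
      unfold hfun
      split_ifs with h
      · have : p - 1 = v := by omega
        have h' : d - p + 1 = d - v := by omega
        rw [this, h', sub_self, sub_self]
      · rw [show d - (p - 1) = d - p + 1 by omega]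
    have e4 : hfun d ℓ r v (p + 1) = fwd r (d - v) - fwd r (d - p - 1) := by
      unfold hfun
      rw [if_neg (by omega), Nat.sub_sub]
    have e5 : hfun d ℓ r v p = fwd r (d - v) - fwd r (d - p) := by
      unfold hfun
      rw [if_neg (by omega)]
    rw [e1, e2, e3, e4, e5]
    linarith

/-- Hitting times of an end leaf `v` with neighbor at position `j`. -/
lemma leaf_isHit {d ℓ r : ℕ} (hd : 3 ≤ d) (hℓ : 1 ≤ ℓ) (hr : 1 ≤ r)
    (v : Fin (d+1) ⊕ Fin (ℓ-1) ⊕ Fin (r-1)) (j : ℕ)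
    (hv : pos d v = 0 ∧ j = 1 ∨ pos d v = d ∧ j = d - 1) :
    IsHit (doubleBroom d ℓ r) v (fun u => if u = v then 0 else
      hfun d ℓ r j (pos d u) + (2 * (numEdges (doubleBroom d ℓ r) : ℝ) - 1)) := by
  have hj : j < d + 1 := by omega
  have H := hfun_isHit hd hℓ hr ⟨j, hj⟩ (by simp only; omega) (by simp only; omega)
  refine H.leaf ?_ ?_ ?_
  · unfold doubleBroom
    rw [SimpleGraph.fromRel_adj]
    rcases v with i | i | i
    · simp only [pos] at hv
      simp only [broomRel, ne_eq, Sum.inl.injEq, Fin.ext_iff]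
      omega
    · simp only [pos] at hv
      simp only [broomRel, ne_eq, reduceCtorEq, not_false_eq_true, true_and, or_false]
      omega
    · simp only [pos] at hv
      simp only [broomRel, ne_eq, reduceCtorEq, not_false_eq_true, true_and, or_false]
      omega
  · have h := deg_broom hd hℓ hr v
    have : (deg (doubleBroom d ℓ r) v : ℝ) = 1 := by
      rw [h]
      rcases hv with ⟨h, -⟩ | ⟨h, -⟩
      · rw [h]
        unfold cL cR
        rw [if_pos rfl, if_neg (by omega), if_neg (by omega), zero_add]
      · rw [h]
        unfold cL cR
        rw [if_pos rfl, if_neg (by omega), if_neg (by omega), add_zero]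
    exact_mod_cast this
  · obtain ⟨e, rfl⟩ : ∃ e, d = e + 3 := ⟨d - 3, by omega⟩
    rw [edges_broom hℓ hr]
    have : (0 : ℝ) ≤ e := e.cast_nonneg
    have : (0 : ℝ) ≤ ℓ := ℓ.cast_nonneg
    have : (0 : ℝ) ≤ r := r.cast_nonneg
    linarith

/-- Every vertex is an inner spine vertex, or lies at one of the two ends. -/
lemma vertex_cases {d ℓ r : ℕ} (v : Fin (d+1) ⊕ Fin (ℓ-1) ⊕ Fin (r-1)) :
    (∃ i : Fin (d+1), v = Sum.inl i ∧ 1 ≤ (i : ℕ) ∧ (i : ℕ) < d) ∨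
      pos d v = 0 ∨ pos d v = d := by
  rcases v with i | i | i
  · by_cases h0 : (i : ℕ) = 0
    · exact Or.inr (Or.inl h0)
    by_cases h1 : (i : ℕ) = d
    · exact Or.inr (Or.inr h1)
    · exact Or.inl ⟨i, rfl, by omega, by have := i.2; omega⟩
  · exact Or.inr (Or.inl rfl)
  · exact Or.inr (Or.inr rfl)

lemma hit_left {d ℓ r : ℕ} (hd : 3 ≤ d) (hℓ : 1 ≤ ℓ) (hr : 1 ≤ r)
    (v w : Fin (d+1) ⊕ Fin (ℓ-1) ⊕ Fin (r-1)) (hv : pos d v = 0) :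
    hit (doubleBroom d ℓ r) w v ≤ hit (doubleBroom d ℓ r) (Sum.inl (Fin.last d)) v := by
  have H := leaf_isHit hd hℓ hr v 1 (Or.inl ⟨hv, rfl⟩)
  have hne : (Sum.inl (Fin.last d) : Fin (d+1) ⊕ Fin (ℓ-1) ⊕ Fin (r-1)) ≠ v := by
    rintro rfl
    simp only [pos, Fin.val_last] at hv
    omega
  rw [H.hit_eq (deg_pos_s2 hd hℓ hr), H.hit_eq (deg_pos_s2 hd hℓ hr)]
  have hnn := H.nonneg (Sum.inl (Fin.last d))
  rw [if_neg hne] at hnn ⊢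
  split_ifs
  · exact hnn
  · have h1 := hfun_le (d := d) (j := 1) hℓ hr (by omega) (pos d w)
    have h2 : hfun d ℓ r 1 0 ≤ hfun d ℓ r 1 d := by
      rw [hfun_zero, hfun_last (by omega)]
      have := one_le_fwd hr (by omega : 1 ≤ d - 1)
      simpa [fwd] using this
    rw [max_eq_right h2] at h1
    simpa [pos] using h1

lemma hit_right {d ℓ r : ℕ} (hd : 3 ≤ d) (hℓ : 1 ≤ ℓ) (hr : 1 ≤ r)
    (v w : Fin (d+1) ⊕ Fin (ℓ-1) ⊕ Fin (r-1)) (hv : pos d v = d) :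
    hit (doubleBroom d ℓ r) w v ≤ hit (doubleBroom d ℓ r) (Sum.inl 0) v := by
  have H := leaf_isHit hd hℓ hr v (d - 1) (Or.inr ⟨hv, rfl⟩)
  have hne : (Sum.inl 0 : Fin (d+1) ⊕ Fin (ℓ-1) ⊕ Fin (r-1)) ≠ v := by
    rintro rfl
    simp only [pos, Fin.val_zero] at hv
    omega
  rw [H.hit_eq (deg_pos_s2 hd hℓ hr), H.hit_eq (deg_pos_s2 hd hℓ hr)]
  have hnn := H.nonneg (Sum.inl 0)
  rw [if_neg hne] at hnn ⊢
  split_ifs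
  · exact hnn
  · have h1 := hfun_le (d := d) (j := d - 1) hℓ hr (by omega) (pos d w)
    have h2 : hfun d ℓ r (d - 1) d ≤ hfun d ℓ r (d - 1) 0 := by
      rw [hfun_zero, hfun_last (by omega), show d - (d - 1) = 1 by omega]
      have := one_le_fwd hℓ (by omega : 1 ≤ d - 1)
      simpa [fwd] using this
    rw [max_eq_left h2] at h1
    simpa [pos] using h1

/-! ### The mixing time -/

lemma Tmix_broom {d ℓ r : ℕ} (hd : 3 ≤ d) (hℓ : 1 ≤ ℓ) (hr : 1 ≤ r) :
    Tmix (doubleBroom d ℓ r) =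
      hit (doubleBroom d ℓ r) (Sum.inl 0) (Sum.inl (Fin.last d)) -
        hitPi (doubleBroom d ℓ r) (Sum.inl (Fin.last d)) := by
  refine Tmix_eq (fun v => ?_) (deg_pos_s2 hd hℓ hr) ?_ (fun w v => ?_)
    (fun w => hit_left hd hℓ hr _ w rfl) (fun w => hit_right hd hℓ hr _ w rfl)
  · rcases vertex_cases v with ⟨i, rfl, h1, h2⟩ | h | h
    · exact ⟨_, hfun_isHit hd hℓ hr i h1 h2⟩
    · exact ⟨_, leaf_isHit hd hℓ hr v 1 (Or.inl ⟨h, rfl⟩)⟩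
    · exact ⟨_, leaf_isHit hd hℓ hr v (d - 1) (Or.inr ⟨h, rfl⟩)⟩
  · obtain ⟨e, rfl⟩ : ∃ e, d = e + 3 := ⟨d - 3, by omega⟩
    rw [edges_broom hℓ hr]
    positivity
  · rcases vertex_cases v with ⟨i, rfl, h1, h2⟩ | h | h
    · have H := hfun_isHit hd hℓ hr i h1 h2
      simp only [H.hit_eq (deg_pos_s2 hd hℓ hr)]
      exact hfun_le hℓ hr h2 _
    · exact le_max_of_le_right (hit_left hd hℓ hr v w h)
    · exact le_max_of_le_left (hit_right hd hℓ hr v w h)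

lemma sum_fwd (c : ℝ) (ℓ e : ℕ) :
    ∑ k ∈ Finset.range e, 2 * (c - fwd ℓ (k + 2)) =
      2 * e * c - 2 * e - (2 * ℓ + 1) * e * (e + 1) -
        2 * (e * (e + 1) * (e - 1) / 3) := by
  induction e with
  | zero => simp
  | succ e ih =>
    rw [Finset.sum_range_succ, ih]
    simp [fwd]
    ring

/-- For the leaf `v_d`, the difference `H(v_0,v_d) - H(π,v_d)` exceeds the one for its neighbor
`v_{d-1}` by exactly `1`; this reduces the average to a sum over positions. -/
lemma access_end {e ℓ r : ℕ} (hℓ : 1 ≤ ℓ) (hr : 1 ≤ r) :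
    hit (doubleBroom (e+3) ℓ r) (Sum.inl 0) (Sum.inl (Fin.last (e+3))) -
        hitPi (doubleBroom (e+3) ℓ r) (Sum.inl (Fin.last (e+3))) =
      fwd ℓ (e+2) + 1 - (ℓ * fwd ℓ (e+2) + (ℓ + 1) * (fwd ℓ (e+2) - 1) +
        ∑ k ∈ Finset.range e, 2 * (fwd ℓ (e+2) - fwd ℓ (k + 2)) + r) /
          (2 * (e + 1 + ℓ + r)) := by
  have hd : 3 ≤ e + 3 := by omega
  set G := doubleBroom (e+3) ℓ r with hG
  have H := leaf_isHit hd hℓ hr (Sum.inl (Fin.last (e+3))) (e + 2) (Or.inr ⟨rfl, rfl⟩)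
  rw [← hG] at H
  have hEdef : (numEdges G : ℝ) = e + 1 + ℓ + r := edges_broom hℓ hr
  have hE : (0 : ℝ) < e + 1 + ℓ + r := by positivity
  have hdeg1 : (deg G (Sum.inl (Fin.last (e+3))) : ℝ) = 1 := by
    rw [hG, deg_broom hd hℓ hr]
    simp [pos, cL, cR]
  have hS := sum_deg_mul (e := e) hℓ hr (hfun (e+3) ℓ r (e+2))
  rw [← hG] at hS
  have hlast : hfun (e+3) ℓ r (e+2) (e+3) = 1 := by
    rw [hfun_last (by omega), show e + 3 - (e + 2) = 1 by omega]
    simp [fwd]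
  have hone : hfun (e+3) ℓ r (e+2) 1 = fwd ℓ (e+2) - 1 := by
    simp [hfun, fwd]
  have hself : hfun (e+3) ℓ r (e+2) (e+2) = 0 := by
    simp [hfun]
  have hmid : ∀ k ∈ Finset.range e, 2 * hfun (e+3) ℓ r (e+2) (k+2) =
      2 * (fwd ℓ (e+2) - fwd ℓ (k+2)) := by
    intro k hk
    have := Finset.mem_range.mp hk
    unfold hfun
    rw [if_pos (by omega)]
  rw [hlast, hone, hself, hfun_zero, Finset.sum_congr rfl hmid] at hS
  have hX : ∑ u, (deg G u : ℝ) * hit G u (Sum.inl (Fin.last (e+3))) =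
      ∑ u, (deg G u : ℝ) * hfun (e+3) ℓ r (e+2) (pos (e+3) u) +
        (2 * (numEdges G : ℝ) - 1) * (2 * (numEdges G : ℝ)) - 2 * (numEdges G : ℝ) := by
    rw [← sum_deg_s2 (G := G)]
    conv_rhs => rw [Finset.mul_sum]
    rw [sum_deg_s2 (G := G), ← Finset.sum_add_distrib]
    have : ∀ u, (deg G u : ℝ) * hit G u (Sum.inl (Fin.last (e+3))) =
        (deg G u * hfun (e+3) ℓ r (e+2) (pos (e+3) u) +
          (2 * (numEdges G : ℝ) - 1) * deg G u) -
        if u = Sum.inl (Fin.last (e+3)) then 2 * (numEdges G : ℝ) else 0 := by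
      intro u
      rw [H.hit_eq (deg_pos_s2 hd hℓ hr)]
      split_ifs with hu
      · subst hu
        rw [hdeg1]
        simp only [pos, Fin.val_last, hlast]
        ring
      · ring
    rw [Finset.sum_congr rfl fun u _ => this u, Finset.sum_sub_distrib]
    simp
  rw [hitPi_eq, hX, hS, H.hit_eq (deg_pos_s2 hd hℓ hr), hEdef]
  rw [if_neg (by simp [Fin.ext_iff])]
  simp only [pos, Fin.val_zero, hfun_zero]
  field_simp
  ring

/-- if `n - d` is even, then
`T_mix(D_{n,d}) = ((d-2)n - d + 5)/2 - (d³ - 6d² + 11d - 6)/(6(n-1))`. -/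
theorem stmt2 (n d : ℕ) (hd3 : 3 ≤ d) (hdn : d ≤ n - 1) (hpar : Even (n - d)) :
    Tmix (balancedDB n d) =
      (((d : ℝ) - 2) * (n : ℝ) - (d : ℝ) + 5) / 2 -
        ((d : ℝ) ^ 3 - 6 * (d : ℝ) ^ 2 + 11 * (d : ℝ) - 6) / (6 * ((n : ℝ) - 1)) := by
  obtain ⟨m, hm⟩ := hpar
  have hm1 : 1 ≤ m := by omega
  obtain ⟨e, rfl⟩ : ∃ e, d = e + 3 := ⟨d - 3, by omega⟩
  obtain rfl : n = e + 3 + (m + m) := by omega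
  have hl : (e + 3 + (m + m) - (e + 3) + 2) / 2 = m + 1 := by omega
  have hr : (e + 3 + (m + m) - (e + 3) + 1) / 2 = m := by omega
  unfold balancedDB
  rw [Tmix_broom hd3 (by omega) (by omega), access_end (by omega) (by omega), hl, hr, sum_fwd]
  have h : (0 : ℝ) < e + 1 + (m + 1) + m := by positivity
  have h' : (e : ℝ) + 3 + (m + m) - 1 = e + 1 + (m + 1) + m := by ring
  simp only [fwd]
  push_cast
  rw [h']
  field_simp
  ring

end RWMix
end
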